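/- arXiv:2303.03567 — 2 statements merged into one kernel-verified Lean document; each statement's English description precedes it below -/
import Mathlib

section
/- Let d ≥ 2. For every choice of constants c ∈ (0, (d−1)/4), T_0 ≥ 1 and M ≥ 4 there exists δ_M > 0, depending only on these quantities, with the following property. Suppose μ is a probability measure supported on a set E ⊆ [0,1]^d whose partial L²-Fourier integral satisfies F_μ(T_1 T_2) ≤ T_1^c · F_μ(T_2) for all T_1, T_2 ≥ T_0. If there exist δ ∈ (0, δ_M) and a finite sequence R_1, …, R_J ∈ (T_0, ∞) satisfying R_{j+1} ≥ δ^{−2} R_j for all 1 ≤ j < J and Σ_{j=1}^J F_μ(R_j) > (1 − 2/M)·F_μ(δ^{−2} R_J), then at least one of the numbers δ R_j^{−1}, 1 ≤ j ≤ J, lies in the distance set Δ(E). -/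
open MeasureTheory Set Metric Filter
open scoped ENNReal NNReal Topology

noncomputable section

abbrev Euc (d : ℕ) : Type := EuclideanSpace ℝ (Fin d)

/-- The closed unit cube `[0,1]^d`. -/
def unitCube (d : ℕ) : Set (Euc d) := {x | ∀ i, x i ∈ Icc (0:ℝ) 1}

/-- The distance set `Δ(E,F) = {|x-y| : x ∈ E, y ∈ F}`. -/
def distSet {d : ℕ} (E F : Set (Euc d)) : Set ℝ :=
  {t | ∃ x ∈ E, ∃ y ∈ F, dist x y = t}

/-- `Q` is a dyadic cube of side length `l`, i.e. `Q = 2^{-k}(m + [0,1]^d)`. -/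
def IsDyadicCube {d : ℕ} (Q : Set (Euc d)) (l : ℝ) : Prop :=
  ∃ (k : ℤ) (m : Fin d → ℤ), l = (2:ℝ) ^ (-k) ∧
    Q = {x | ∀ i, (m i : ℝ) * (2:ℝ) ^ (-k) ≤ x i ∧ x i ≤ ((m i : ℝ) + 1) * (2:ℝ) ^ (-k)}

/-- The `s`-dimensional dyadic Hausdorff content: the infimum of `∑ ℓ(Q_i)^s` over
countable covers of `E` by dyadic cubes. -/
def dyadicContent {d : ℕ} (s : ℝ) (E : Set (Euc d)) : ℝ≥0∞ :=
  ⨅ (Q : ℕ → Set (Euc d)) (l : ℕ → ℝ) (_ : ∀ i, IsDyadicCube (Q i) (l i))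
    (_ : E ⊆ ⋃ i, Q i), ∑' i, ENNReal.ofReal (l i ^ s)

/-- The Fourier transform `μ̂(ξ) = ∫ e^{-i x·ξ} dμ(x)` of a finite Borel measure. -/
def fourierM {d : ℕ} (μ : Measure (Euc d)) (ξ : Euc d) : ℂ :=
  ∫ x, Complex.exp (-(Complex.I * ((inner ℝ x ξ : ℝ) : ℂ))) ∂μ

/-- The partial `L²`-Fourier integral `F_μ(T) = ∫_{|ξ| ≤ T} |μ̂(ξ)|² dξ`. -/
def FmuInt {d : ℕ} (μ : Measure (Euc d)) (T : ℝ) : ℝ :=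
  ∫ ξ in {ξ : Euc d | ‖ξ‖ ≤ T}, ‖fourierM μ ξ‖ ^ 2

/-- A probability measure on the unit sphere that is invariant under isometries. -/
def SphInv {d : ℕ} (ν : Measure (Euc d)) : Prop :=
  (∀ᵐ ω ∂ν, ‖ω‖ = 1) ∧ ∀ L : Euc d ≃ₗᵢ[ℝ] Euc d, MeasurePreserving L ν ν

lemma exists_sphInv (d : ℕ) (hd : 2 ≤ d) :
    ∃ ν : Measure (Euc d), IsProbabilityMeasure ν ∧ SphInv ν := by
  have : Nonempty (Fin d) := ⟨⟨0, by omega⟩⟩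
  have : Nontrivial (Euc d) := by
    have : Nontrivial (Fin d) := Fin.nontrivial_iff_two_le.2 hd
    infer_instance
  set μ0 : Measure (Euc d) := volume.restrict (ball 0 1) with hμ0
  set π : Euc d → Euc d := fun x => ‖x‖⁻¹ • x with hπ
  have hπm : Measurable π := by fun_prop
  have hb0 : volume (ball (0 : Euc d) 1) ≠ 0 := (measure_ball_pos _ _ one_pos).ne'
  have hbt : volume (ball (0 : Euc d) 1) ≠ ∞ := measure_ball_lt_top.ne
  refine ⟨(volume (ball (0 : Euc d) 1))⁻¹ • Measure.map π μ0, ⟨?_⟩, ?_, ?_⟩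
  · rw [Measure.smul_apply, Measure.map_apply hπm MeasurableSet.univ]
    simp only [preimage_univ, hμ0, Measure.restrict_apply_univ, smul_eq_mul]
    exact ENNReal.inv_mul_cancel hb0 hbt
  · refine Measure.ae_smul_measure ?_ _
    rw [ae_map_iff hπm.aemeasurable (measurableSet_eq_fun (by fun_prop) (by fun_prop))]
    have h0 : ∀ᵐ x ∂(volume : Measure (Euc d)), x ≠ 0 := by
      simp [ae_iff]
    filter_upwards [ae_restrict_of_ae h0] with x hx
    simp [hπ, norm_smul, hx]
  · intro L
    have hL : MeasurePreserving L μ0 μ0 := by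
      have := (L.measurePreserving).restrict_preimage (s := ball (0 : Euc d) 1)
        measurableSet_ball
      have h2 : L ⁻¹' ball (0 : Euc d) 1 = ball 0 1 := by
        ext x; simp
      rwa [h2] at this
    refine ⟨L.continuous.measurable, ?_⟩
    rw [Measure.map_smul, Measure.map_map L.continuous.measurable hπm]
    congr 1
    have : (L ∘ π) = π ∘ L := by
      ext1 x; simp [hπ]
    rw [this, ← Measure.map_map hπm L.continuous.measurable, hL.map_eq]

lemma SphInv.integral_comp {d : ℕ} {ν : Measure (Euc d)} (h : SphInv ν)
    (L : Euc d ≃ₗᵢ[ℝ] Euc d) (g : Euc d → ℝ) : ∫ ω, g (L ω) ∂ν = ∫ ω, g ω ∂ν :=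
  (h.2 L).integral_comp L.toHomeomorph.measurableEmbedding g

lemma diff_int {d : ℕ} (ν : Measure (Euc d)) [IsFiniteMeasure ν] (F F' : ℝ → Euc d → ℝ) (B : ℝ)
    (hF : ∀ s, Continuous (F s)) (hF' : ∀ s, Continuous (F' s))
    (hInt : ∀ s, Integrable (F s) ν)
    (hd : ∀ s ω, HasDerivAt (fun s => F s ω) (F' s ω) s)
    (hb : ∀ᵐ ω ∂ν, ∀ s, |F' s ω| ≤ B) (s : ℝ) :
    HasDerivAt (fun s => ∫ ω, F s ω ∂ν) (∫ ω, F' s ω ∂ν) s := by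
  refine (hasDerivAt_integral_of_dominated_loc_of_deriv_le (s := univ) (bound := fun _ => B)
    univ_mem ?_ (hInt s) (hF' s).aestronglyMeasurable ?_ (integrable_const _) ?_).2
  · exact Eventually.of_forall fun s => (hF s).aestronglyMeasurable
  · filter_upwards [hb] with ω h x _ using h x
  · exact Eventually.of_forall fun ω x _ => hd x ω

lemma bdd_int {d : ℕ} (ν : Measure (Euc d)) [IsFiniteMeasure ν] (f : Euc d → ℝ) (B : ℝ)
    (hf : Continuous f) (hb : ∀ᵐ ω ∂ν, |f ω| ≤ B) : Integrable f ν :=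
  Integrable.of_bound hf.aestronglyMeasurable B hb

lemma abs_coord_le {d : ℕ} {ω : Euc d} (h : ‖ω‖ = 1) (i : Fin d) : |ω i| ≤ 1 := by
  rw [← h, ← Real.norm_eq_abs]; exact PiLp.norm_apply_le ω i

/-- Fourier transform of the sphere, profile. -/
def uu {d : ℕ} (ν : Measure (Euc d)) (i : Fin d) (s : ℝ) : ℝ := ∫ ω, Real.cos (s * ω i) ∂ν
def uu1 {d : ℕ} (ν : Measure (Euc d)) (i : Fin d) (s : ℝ) : ℝ :=
  ∫ ω, -(ω i * Real.sin (s * ω i)) ∂ν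
def uu2 {d : ℕ} (ν : Measure (Euc d)) (i : Fin d) (s : ℝ) : ℝ :=
  ∫ ω, -(ω i * (ω i * Real.cos (s * ω i))) ∂ν

lemma abs_mul_trig {x y : ℝ} (hx : |x| ≤ 1) (hy : |y| ≤ 1) : |x * y| ≤ 1 := by
  rw [abs_mul]; exact mul_le_one₀ hx (abs_nonneg _) hy

lemma uu_deriv {d : ℕ} {ν : Measure (Euc d)} [IsProbabilityMeasure ν] (h : SphInv ν) (i : Fin d)
    (s : ℝ) : HasDerivAt (uu ν i) (uu1 ν i s) s := by
  refine diff_int ν (fun s ω => Real.cos (s * ω i)) (fun s ω => -(ω i * Real.sin (s * ω i))) 1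
    (fun s => by fun_prop) (fun s => by fun_prop) (fun s => ?_) (fun s ω => ?_) ?_ s
  · exact bdd_int ν _ 1 (by fun_prop) (Eventually.of_forall fun ω => Real.abs_cos_le_one _)
  · have := ((hasDerivAt_id' s).mul_const (ω i)).cos
    refine this.congr_deriv ?_
    ring
  · filter_upwards [h.1] with ω hω s
    rw [abs_neg]
    exact abs_mul_trig (abs_coord_le hω i) (Real.abs_sin_le_one _)

lemma uu1_deriv {d : ℕ} {ν : Measure (Euc d)} [IsProbabilityMeasure ν] (h : SphInv ν) (i : Fin d)
    (s : ℝ) : HasDerivAt (uu1 ν i) (uu2 ν i s) s := by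
  refine diff_int ν (fun s ω => -(ω i * Real.sin (s * ω i)))
    (fun s ω => -(ω i * (ω i * Real.cos (s * ω i)))) 1
    (fun s => by fun_prop) (fun s => by fun_prop) (fun s => ?_) (fun s ω => ?_) ?_ s
  · refine bdd_int ν _ 1 (by fun_prop) ?_
    filter_upwards [h.1] with ω hω
    rw [abs_neg]
    exact abs_mul_trig (abs_coord_le hω i) (Real.abs_sin_le_one _)
  · have := ((((hasDerivAt_id' s).mul_const (ω i)).sin).const_mul (ω i)).neg
    refine this.congr_deriv ?_
    ring
  · filter_upwards [h.1] with ω hω s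
    rw [abs_neg]
    exact abs_mul_trig (abs_coord_le hω i)
      (abs_mul_trig (abs_coord_le hω i) (Real.abs_cos_le_one _))

/-- reflection in the plane spanned by two coordinates -/
lemma exists_refl {d : ℕ} (i j : Fin d) (hij : i ≠ j) (θ : ℝ) :
    ∃ L : Euc d ≃ₗᵢ[ℝ] Euc d, (∀ ω, (L ω) i = -Real.cos θ * ω i - Real.sin θ * ω j) ∧
      (∀ ω, (L ω) j = -Real.sin θ * ω i + Real.cos θ * ω j) := by
  set n : Euc d := Real.cos (θ/2) • EuclideanSpace.single i (1:ℝ) +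
    Real.sin (θ/2) • EuclideanSpace.single j (1:ℝ) with hn
  have hin : ∀ ω : Euc d, inner ℝ n ω = Real.cos (θ/2) * ω i + Real.sin (θ/2) * ω j := by
    intro ω
    rw [hn, inner_add_left, inner_smul_left, inner_smul_left,
      EuclideanSpace.inner_single_left, EuclideanSpace.inner_single_left]
    simp
  have ni : n i = Real.cos (θ/2) := by simp [hn, hij]
  have nj : n j = Real.sin (θ/2) := by simp [hn, hij.symm]
  have hnn : ‖n‖ ^ 2 = 1 := by
    rw [← real_inner_self_eq_norm_sq, hin, ni, nj]
    nlinarith [Real.sin_sq_add_cos_sq (θ/2)]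
  have hc : Real.cos θ = 2 * Real.cos (θ/2) ^ 2 - 1 := by
    rw [← Real.cos_two_mul]; congr 1; ring
  have hs : Real.sin θ = 2 * Real.sin (θ/2) * Real.cos (θ/2) := by
    rw [← Real.sin_two_mul]; congr 1; ring
  have hsc := Real.sin_sq_add_cos_sq (θ/2)
  refine ⟨(ℝ ∙ n)ᗮ.reflection, fun ω => ?_, fun ω => ?_⟩
  · rw [Submodule.reflection_orthogonal_apply, Submodule.reflection_singleton_apply]
    simp only [hnn, hin, RCLike.ofReal_real_eq_id, id, PiLp.neg_apply, PiLp.sub_apply,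
      PiLp.smul_apply, ni, hc, hs, smul_eq_mul, nsmul_eq_mul]
    simp
    ring
  · rw [Submodule.reflection_orthogonal_apply, Submodule.reflection_singleton_apply]
    simp only [hnn, hin, RCLike.ofReal_real_eq_id, id, PiLp.neg_apply, PiLp.sub_apply,
      PiLp.smul_apply, nj, hc, hs, smul_eq_mul, nsmul_eq_mul]
    simp
    linear_combination (-2 * ω j) * hsc

lemma sph_ibp {d : ℕ} {ν : Measure (Euc d)} [IsProbabilityMeasure ν] (h : SphInv ν) (i j : Fin d)
    (hij : i ≠ j) (s : ℝ) :
    ∫ ω, s * (ω j ^ 2 * Real.cos (s * ω i)) ∂ν = - uu1 ν i s := by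
  set G : ℝ → Euc d → ℝ := fun θ ω => (-Real.sin θ * ω i + Real.cos θ * ω j) *
    Real.sin (s * (-Real.cos θ * ω i - Real.sin θ * ω j)) with hG
  set G' : ℝ → Euc d → ℝ := fun θ ω => (-Real.cos θ * ω i - Real.sin θ * ω j) *
    Real.sin (s * (-Real.cos θ * ω i - Real.sin θ * ω j)) +
    (-Real.sin θ * ω i + Real.cos θ * ω j) *
    (Real.cos (s * (-Real.cos θ * ω i - Real.sin θ * ω j)) *
      (s * (Real.sin θ * ω i - Real.cos θ * ω j))) with hG'
  have key : ∀ {a b x y : ℝ}, |a| ≤ 1 → |b| ≤ 1 → |x| ≤ 1 → |y| ≤ 1 → |a * x + b * y| ≤ 2 := by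
    intro a b x y ha hb hx hy
    calc |a * x + b * y| ≤ |a * x| + |b * y| := abs_add_le _ _
      _ ≤ 1 + 1 := add_le_add (abs_mul_trig ha hx) (abs_mul_trig hb hy)
      _ = 2 := by norm_num
  have hd := diff_int ν G G' (2 + 4 * |s|) (fun θ => by simp only [hG]; fun_prop)
    (fun θ => by simp only [hG']; fun_prop) (fun θ => ?_) (fun θ ω => ?_) ?_ 0
  · have hconst : (fun θ => ∫ ω, G θ ω ∂ν) = fun _ => ∫ ω, ω j * Real.sin (s * ω i) ∂ν := by
      ext θ
      obtain ⟨L, hL1, hL2⟩ := exists_refl i j hij θ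
      rw [← h.integral_comp L (fun ω => ω j * Real.sin (s * ω i))]
      simp only [hL1, hL2, hG]
    rw [hconst] at hd
    have h0 := hd.unique (hasDerivAt_const _ _)
    have hI1 : Integrable (fun ω : Euc d => -(ω i * Real.sin (s * ω i))) ν := by
      refine bdd_int ν _ 1 (by fun_prop) ?_
      filter_upwards [h.1] with ω hω
      rw [abs_neg]
      exact abs_mul_trig (abs_coord_le hω i) (Real.abs_sin_le_one _)
    have hI2 : Integrable (fun ω : Euc d => s * (ω j ^ 2 * Real.cos (s * ω i))) ν := by
      refine Integrable.const_mul (bdd_int ν _ 1 (by fun_prop) ?_) s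
      filter_upwards [h.1] with ω hω
      rw [pow_two]
      exact abs_mul_trig (abs_mul_trig (abs_coord_le hω j) (abs_coord_le hω j))
        (Real.abs_cos_le_one _)
    have : ∫ ω, G' 0 ω ∂ν = -(∫ ω, -(ω i * Real.sin (s * ω i)) ∂ν)
        - ∫ ω, s * (ω j ^ 2 * Real.cos (s * ω i)) ∂ν := by
      rw [← integral_neg, ← integral_sub (by simpa using hI1.neg) hI2]
      congr 1; ext ω
      simp [hG']
      ring
    rw [this] at h0
    unfold uu1
    linarith
  · refine bdd_int ν _ 2 (by simp only [hG]; fun_prop) ?_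
    filter_upwards [h.1] with ω hω
    simp only [hG]
    rw [abs_mul]
    have h1 := key (a := -Real.sin θ) (b := Real.cos θ) (by rw [abs_neg]; exact Real.abs_sin_le_one _)
      (Real.abs_cos_le_one _) (abs_coord_le hω i) (abs_coord_le hω j)
    calc _ ≤ 2 * 1 := mul_le_mul h1 (Real.abs_sin_le_one _) (abs_nonneg _) (by norm_num)
      _ = 2 := by norm_num
  · have hS := Real.hasDerivAt_sin θ
    have hC := Real.hasDerivAt_cos θ
    have h1 := (hS.neg.mul_const (ω i)).add (hC.mul_const (ω j))
    have h2 := (((hC.neg.mul_const (ω i)).sub (hS.mul_const (ω j))).const_mul s).sin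
    refine (h1.mul h2).congr_deriv ?_
    simp only [hG', Pi.add_apply, Pi.sub_apply, Pi.neg_apply]
    ring
  · filter_upwards [h.1] with ω hω θ
    have hi := abs_coord_le hω i
    have hj := abs_coord_le hω j
    have h1 := key (a := -Real.sin θ) (b := Real.cos θ) (by rw [abs_neg]; exact Real.abs_sin_le_one _)
      (Real.abs_cos_le_one _) hi hj
    have h2 := key (a := -Real.cos θ) (b := -Real.sin θ) (by rw [abs_neg]; exact Real.abs_cos_le_one _)
      (by rw [abs_neg]; exact Real.abs_sin_le_one _) hi hj
    have h3 : |Real.sin θ * ω i - Real.cos θ * ω j| ≤ 2 := by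
      rw [← abs_neg]; convert h1 using 2; ring
    have h2' : |-Real.cos θ * ω i - Real.sin θ * ω j| ≤ 2 := by
      convert h2 using 2; ring
    simp only [hG']
    refine (abs_add_le _ _).trans (add_le_add ?_ ?_)
    · rw [abs_mul]
      calc _ ≤ 2 * 1 := mul_le_mul h2' (Real.abs_sin_le_one _) (abs_nonneg _) (by norm_num)
        _ = 2 := by norm_num
    · rw [abs_mul, abs_mul, abs_mul]
      calc _ ≤ 2 * (1 * (|s| * 2)) := by
            gcongr
            exact Real.abs_cos_le_one _
        _ = 4 * |s| := by ring

lemma uu_ode {d : ℕ} {ν : Measure (Euc d)} [IsProbabilityMeasure ν] (h : SphInv ν) (i : Fin d)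
    (s : ℝ) : s * (uu2 ν i s + uu ν i s) = -((d:ℝ) - 1) * uu1 ν i s := by
  have hI : ∀ j, Integrable (fun ω : Euc d => s * (ω j ^ 2 * Real.cos (s * ω i))) ν := by
    intro j
    refine Integrable.const_mul (bdd_int ν _ 1 (by fun_prop) ?_) s
    filter_upwards [h.1] with ω hω
    rw [pow_two]
    exact abs_mul_trig (abs_mul_trig (abs_coord_le hω j) (abs_coord_le hω j))
      (Real.abs_cos_le_one _)
  have hsum : ∑ j, ∫ ω, s * (ω j ^ 2 * Real.cos (s * ω i)) ∂ν = s * uu ν i s := by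
    rw [← integral_finsetSum _ (fun j _ => hI j), uu, ← integral_const_mul]
    refine integral_congr_ae ?_
    filter_upwards [h.1] with ω hω
    have : ∑ j, ω j ^ 2 = 1 := by
      have := EuclideanSpace.real_norm_sq_eq ω
      rw [← this, hω]; norm_num
    rw [← Finset.mul_sum, ← Finset.sum_mul, this]
    ring
  have hi : ∫ ω, s * (ω i ^ 2 * Real.cos (s * ω i)) ∂ν = - (s * uu2 ν i s) := by
    rw [uu2, integral_neg, mul_neg, ← integral_const_mul s, neg_neg]
    congr 1; ext ω; ring
  rw [← Finset.add_sum_erase _ _ (Finset.mem_univ i), hi,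
    Finset.sum_congr rfl (fun j hj => sph_ibp h i j (Finset.ne_of_mem_erase hj).symm s)] at hsum
  rw [Finset.sum_const, Finset.card_erase_of_mem (Finset.mem_univ i), Finset.card_univ,
    Fintype.card_fin, nsmul_eq_mul, Nat.cast_sub (by have := i.2; omega)] at hsum
  push_cast at hsum
  linarith



lemma ode_decay (u u1 u2 : ℝ → ℝ) (m : ℕ) (hu : ∀ s, HasDerivAt u (u1 s) s)
    (hu1 : ∀ s, HasDerivAt u1 (u2 s) s)
    (ode : ∀ s, s * (u2 s + u s) = -((m:ℝ) + 1) * u1 s) :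
    ∃ C, 0 ≤ C ∧ ∀ s, 1 ≤ s → s ^ (m+1) * (u s) ^ 2 ≤ C := by
  set a : ℝ := ((m:ℝ) + 1) / 2 with ha
  set κ : ℝ := |a ^ 2 - a| with hκ
  set p : ℝ → ℝ := fun s => u1 s + a * s⁻¹ * u s with hp
  set En : ℝ → ℝ := fun s => s ^ (m+1) * (u s ^ 2 + p s ^ 2) with hEn
  set H : ℝ → ℝ := fun s => En s * Real.exp (κ * s⁻¹) with hH
  have hEd : ∀ s, 0 < s →
      HasDerivAt En (s ^ (m+1) * (s ^ 2)⁻¹ * (2 * (a^2 - a) * u s * p s)) s := by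
    intro s hs
    have hi := hasDerivAt_inv hs.ne'
    have hpd : HasDerivAt p (u2 s + (a * (-(s^2)⁻¹) * u s + a * s⁻¹ * u1 s)) s :=
      (hu1 s).add ((hi.const_mul a).mul (hu s))
    have hE : HasDerivAt En (((m+1 : ℕ) : ℝ) * s ^ m * (u s ^ 2 + p s ^ 2) + s ^ (m+1) *
        (2 * u s * u1 s + 2 * p s * (u2 s + (a * (-(s^2)⁻¹) * u s + a * s⁻¹ * u1 s)))) s := by
      have h1 := hasDerivAt_pow (m+1) s
      have h2 := ((hu s).pow 2).add (hpd.pow 2)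
      refine (h1.mul h2).congr_deriv ?_
      simp
    refine hE.congr_deriv ?_
    have h2 : u2 s = -(2 * a) * u1 s / s - u s := by
      field_simp
      have := ode s
      rw [ha]; linarith
    rw [h2]
    have hm : ((m+1 : ℕ) : ℝ) = 2 * a := by rw [ha]; push_cast; ring
    rw [hm]
    simp only [hp]
    field_simp
    ring
  have hHd : ∀ s, 0 < s → HasDerivAt H (s ^ (m+1) * (s ^ 2)⁻¹ * (2 * (a^2 - a) * u s * p s) *
      Real.exp (κ * s⁻¹) + En s * (Real.exp (κ * s⁻¹) * (κ * -(s^2)⁻¹))) s := by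
    intro s hs
    exact (hEd s hs).mul ((hasDerivAt_inv hs.ne').const_mul κ).exp
  have hanti : AntitoneOn H (Ici 1) := by
    refine antitoneOn_of_deriv_nonpos (convex_Ici 1) ?_ ?_ ?_
    · intro s hs
      exact (hHd s (lt_of_lt_of_le one_pos hs)).continuousAt.continuousWithinAt
    · intro s hs
      rw [interior_Ici] at hs
      exact (hHd s (lt_trans one_pos hs)).differentiableAt.differentiableWithinAt
    · intro s hs
      rw [interior_Ici] at hs
      have hs0 : 0 < s := lt_trans one_pos hs
      rw [(hHd s hs0).deriv]
      have : s ^ (m+1) * (s ^ 2)⁻¹ * (2 * (a^2 - a) * u s * p s) *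
        Real.exp (κ * s⁻¹) + En s * (Real.exp (κ * s⁻¹) * (κ * -(s^2)⁻¹)) =
        -(s ^ (m+1) * (s ^ 2)⁻¹ * Real.exp (κ * s⁻¹) *
          (κ * (u s ^ 2 + p s ^ 2) - 2 * (a^2 - a) * u s * p s)) := by
        simp only [hEn]; ring
      rw [this, neg_nonpos]
      refine mul_nonneg (by positivity) ?_
      have h1 : (a^2 - a) * (2 * u s * p s) ≤ κ * (u s ^ 2 + p s ^ 2) := by
        calc (a^2 - a) * (2 * u s * p s) ≤ |(a^2 - a) * (2 * u s * p s)| := le_abs_self _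
          _ = κ * |2 * u s * p s| := abs_mul _ _
          _ ≤ κ * (u s ^ 2 + p s ^ 2) := by
            refine mul_le_mul_of_nonneg_left ?_ (abs_nonneg _)
            rw [abs_le]; constructor <;> nlinarith [sq_nonneg (u s + p s), sq_nonneg (u s - p s)]
      linarith
  refine ⟨H 1, ?_, fun s hs => ?_⟩
  · simp only [hH, hEn]; positivity
  · have hs0 : 0 < s := lt_of_lt_of_le one_pos hs
    refine le_trans ?_ (hanti (mem_Ici.2 le_rfl) (mem_Ici.2 hs) hs)
    have he : 1 ≤ Real.exp (κ * s⁻¹) := Real.one_le_exp (by positivity)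
    calc s ^ (m+1) * (u s) ^ 2 ≤ En s := by
          simp only [hEn]; gcongr; nlinarith [sq_nonneg (p s)]
      _ ≤ H s := le_mul_of_one_le_right (by simp only [hEn]; positivity) he

lemma uu_unit {d : ℕ} {ν : Measure (Euc d)} (h : SphInv ν) (i : Fin d)
    (ξ : Euc d) : ∫ ω, Real.cos (inner ℝ ω ξ) ∂ν = uu ν i ‖ξ‖ := by
  have hn : ‖ξ‖ = ‖‖ξ‖ • EuclideanSpace.single i (1:ℝ)‖ := by
    simp [norm_smul]
  set L := (ℝ ∙ (ξ - ‖ξ‖ • EuclideanSpace.single i (1:ℝ)))ᗮ.reflection with hL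
  have hLξ : L ξ = ‖ξ‖ • EuclideanSpace.single i (1:ℝ) := Submodule.reflection_sub hn
  have := h.integral_comp L (fun ω => Real.cos (inner ℝ ω (L ξ)))
  simp only [LinearIsometryEquiv.inner_map_map] at this
  rw [this, hLξ, uu]
  congr 1; ext ω
  rw [inner_smul_right, EuclideanSpace.inner_single_right]
  simp

lemma uu_plane {d : ℕ} {ν : Measure (Euc d)} (h : SphInv ν) (i j : Fin d) (hij : i ≠ j)
    (s x y : ℝ) (hxy : x ^ 2 + y ^ 2 = 1) (hs : 0 ≤ s) :
    ∫ ω, Real.cos (s * (x * ω i + y * ω j)) ∂ν = uu ν i s := by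
  set v : Euc d := s • (x • EuclideanSpace.single i (1:ℝ) + y • EuclideanSpace.single j (1:ℝ)) with hv
  have hin : ∀ ω : Euc d, inner ℝ ω v = s * (x * ω i + y * ω j) := by
    intro ω
    rw [hv, inner_smul_right, inner_add_right, inner_smul_right, inner_smul_right,
      EuclideanSpace.inner_single_right, EuclideanSpace.inner_single_right]
    simp
  have hvi : v i = s * x := by simp [hv, hij]
  have hvj : v j = s * y := by simp [hv, hij.symm]
  have hnv : ‖v‖ = s := by
    rw [← sq_eq_sq₀ (norm_nonneg _) hs, ← real_inner_self_eq_norm_sq, hin, hvi, hvj]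
    linear_combination s ^ 2 * hxy
  have := uu_unit h i v
  simp only [hin, hnv] at this
  exact this

lemma cos_int {d : ℕ} (ν : Measure (Euc d)) [IsFiniteMeasure ν] (f : Euc d → ℝ)
    (hf : Continuous f) : Integrable (fun ω => Real.cos (f ω)) ν :=
  bdd_int ν _ 1 (by fun_prop) (Eventually.of_forall fun ω => Real.abs_cos_le_one _)

lemma uu_tri {d : ℕ} {ν : Measure (Euc d)} [IsProbabilityMeasure ν] (h : SphInv ν)
    (i j : Fin d) (hij : i ≠ j)
    (s x y : ℝ) (hxy : x ^ 2 + y ^ 2 = 1) (hs : 0 ≤ s) (hu : uu ν i s ≤ -1/2) :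
    ∀ᵐ ω ∂ν, Real.cos (s * (x * ω i + y * ω j)) = -1/2 := by
  have h3 : Real.sqrt 3 ^ 2 = 3 := Real.sq_sqrt (by norm_num)
  set x' := x / 2 - Real.sqrt 3 / 2 * y with hx'
  set y' := y / 2 + Real.sqrt 3 / 2 * x with hy'
  set x'' := x / 2 + Real.sqrt 3 / 2 * y with hx''
  set y'' := y / 2 - Real.sqrt 3 / 2 * x with hy''
  have e1 := uu_plane h i j hij s x y hxy hs
  have e2 := uu_plane h i j hij s x' y' (by
    rw [hx', hy']; linear_combination (1/4 * (x^2+y^2)) * h3 + hxy) hs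
  have e3 := uu_plane h i j hij s x'' y'' (by
    rw [hx'', hy'']; linear_combination (1/4 * (x^2+y^2)) * h3 + hxy) hs
  set α : Euc d → ℝ := fun ω => s * (x * ω i + y * ω j) with hα
  set β : Euc d → ℝ := fun ω => s * (x' * ω i + y' * ω j) with hβ
  set γ : Euc d → ℝ := fun ω => s * (x'' * ω i + y'' * ω j) with hγ
  have hαc : Continuous α := by simp only [hα]; fun_prop
  have hβc : Continuous β := by simp only [hβ]; fun_prop
  have hγc : Continuous γ := by simp only [hγ]; fun_prop
  have hrel : ∀ ω, γ ω = α ω - β ω := by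
    intro ω; simp only [hα, hβ, hγ, hx', hy', hx'', hy'']; ring
  set g : Euc d → ℝ := fun ω => 3 + 2 * Real.cos (α ω) + 2 * Real.cos (β ω) + 2 * Real.cos (γ ω)
    with hg
  have hg2 : ∀ ω, g ω = (1 + Real.cos (α ω) + Real.cos (β ω)) ^ 2 +
      (Real.sin (α ω) + Real.sin (β ω)) ^ 2 := by
    intro ω
    simp only [hg, hrel, Real.cos_sub]
    linear_combination (-1) * Real.sin_sq_add_cos_sq (α ω) - Real.sin_sq_add_cos_sq (β ω)
  have i1 := (cos_int ν α hαc).const_mul 2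
  have i2 := (cos_int ν β hβc).const_mul 2
  have i3 := (cos_int ν γ hγc).const_mul 2
  have i0 : Integrable (fun _ : Euc d => (3:ℝ)) ν := integrable_const _
  have hgi : Integrable g ν := ((i0.add i1).add i2).add i3
  have i01 : Integrable (fun ω : Euc d => 3 + 2 * Real.cos (α ω)) ν := i0.add i1
  have i012 : Integrable (fun ω : Euc d => 3 + 2 * Real.cos (α ω) + 2 * Real.cos (β ω)) ν :=
    i01.add i2
  have hgint : ∫ ω, g ω ∂ν = 3 + 6 * uu ν i s := by
    simp only [hg]
    rw [integral_add i012 i3, integral_add i01 i2, integral_add i0 i1,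
      integral_const_mul, integral_const_mul, integral_const_mul, e1, e2, e3]
    simp; ring
  have hg0 : 0 ≤ g := fun ω => by rw [hg2]; positivity
  have hz : ∫ ω, g ω ∂ν = 0 := le_antisymm (by rw [hgint]; linarith) (integral_nonneg hg0)
  rw [integral_eq_zero_iff_of_nonneg hg0 hgi] at hz
  filter_upwards [hz] with ω hω
  simp only [Pi.zero_apply, hg2] at hω
  have k1 : 1 + Real.cos (α ω) + Real.cos (β ω) = 0 := by
    nlinarith [sq_nonneg (1 + Real.cos (α ω) + Real.cos (β ω)), sq_nonneg (Real.sin (α ω) + Real.sin (β ω))]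
  have k2 : Real.sin (α ω) + Real.sin (β ω) = 0 := by
    nlinarith [sq_nonneg (1 + Real.cos (α ω) + Real.cos (β ω)), sq_nonneg (Real.sin (α ω) + Real.sin (β ω))]
  have c1 : Real.cos (β ω) = -1 - Real.cos (α ω) := by linarith
  have c2 : Real.sin (β ω) = - Real.sin (α ω) := by linarith
  have c3 := Real.sin_sq_add_cos_sq (β ω)
  rw [c1, c2] at c3
  have c4 := Real.sin_sq_add_cos_sq (α ω)
  show Real.cos (α ω) = _
  nlinarith

lemma uu_gt {d : ℕ} {ν : Measure (Euc d)} [IsProbabilityMeasure ν] (h : SphInv ν)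
    (i j : Fin d) (hij : i ≠ j) (s : ℝ) (hs : 0 ≤ s) : -1/2 < uu ν i s := by
  by_contra! hu
  have h35 : Real.sqrt 35 ^ 2 = 35 := Real.sq_sqrt (by norm_num)
  have a1 := uu_tri h i j hij s (1/6) (Real.sqrt 35 / 6) (by linear_combination (1/36) * h35) hs hu
  have a2 := uu_tri h i j hij s (-1/6) (Real.sqrt 35 / 6) (by linear_combination (1/36) * h35) hs hu
  have a3 := uu_tri h i j hij s 1 0 (by norm_num) hs hu
  obtain ⟨ω, h1, h2, h3⟩ := (a1.and (a2.and a3)).exists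
  set α := s * (1/6 * ω i + Real.sqrt 35 / 6 * ω j)
  set β := s * (-1/6 * ω i + Real.sqrt 35 / 6 * ω j)
  have hrel : s * (1 * ω i + 0 * ω j) = 3 * α - 3 * β := by simp only [α, β]; ring
  have k : ∀ t : ℝ, Real.cos t = -1/2 → Real.cos (3 * t) = 1 ∧ Real.sin (3 * t) = 0 := by
    intro t ht
    have : Real.cos (3 * t) = 1 := by rw [Real.cos_three_mul, ht]; norm_num
    refine ⟨this, ?_⟩
    have := Real.sin_sq_add_cos_sq (3 * t)
    nlinarith
  rw [hrel, Real.cos_sub, (k α h1).1, (k α h1).2, (k β h2).1] at h3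
  norm_num at h3

lemma sphere_pkg (d : ℕ) (hd : 2 ≤ d) : ∃ (ν : Measure (Euc d)) (u : ℝ → ℝ) (C b : ℝ),
    IsProbabilityMeasure ν ∧ (∀ᵐ ω ∂ν, ‖ω‖ = 1) ∧
    (∀ ξ : Euc d, ∫ ω, Real.cos (inner ℝ ω ξ) ∂ν = u ‖ξ‖) ∧ Continuous u ∧ 0 < C ∧ 0 < b ∧
    b < 1/2 ∧ (∀ s, 0 < s → |u s| ≤ C * s ^ (-(((d:ℝ) - 1) / 2))) ∧ (∀ s, 0 ≤ s → -b ≤ u s) ∧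
    (∀ s, 1 - s ^ 2 / 2 ≤ u s) ∧ ∀ s, |u s| ≤ 1 := by
  obtain ⟨ν, hν, h⟩ := exists_sphInv d hd
  set i : Fin d := ⟨0, by omega⟩ with hi
  set j : Fin d := ⟨1, by omega⟩ with hj
  have hij : i ≠ j := by simp [hi, hj]
  have hcont : Continuous (uu ν i) :=
    continuous_iff_continuousAt.2 fun s => (uu_deriv h i s).continuousAt
  obtain ⟨m, rfl⟩ : ∃ m, d = m + 2 := ⟨d - 2, by omega⟩
  obtain ⟨C0, hC0, hdec⟩ := ode_decay (uu ν i) (uu1 ν i) (uu2 ν i) m (uu_deriv h i) (uu1_deriv h i)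
    (fun s => by rw [uu_ode h i s]; push_cast; ring)
  have habs : ∀ s, |uu ν i s| ≤ 1 := by
    intro s
    have := norm_integral_le_of_norm_le_const (μ := ν) (f := fun ω => Real.cos (s * ω i)) (C := 1)
      (Eventually.of_forall fun ω => Real.abs_cos_le_one _)
    simpa [uu] using this
  have hlow : ∀ s, 1 - s ^ 2 / 2 ≤ uu ν i s := by
    intro s
    have : ∫ _ω : Euc (m+2), (1 - s ^ 2 / 2) ∂ν ≤ uu ν i s := by
      refine integral_mono_ae (integrable_const _) (cos_int ν _ (by fun_prop)) ?_
      filter_upwards [h.1] with ω hω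
      refine le_trans ?_ (Real.one_sub_sq_div_two_le_cos)
      have h1 : ω i ^ 2 ≤ 1 := by
        rw [sq_le_one_iff_abs_le_one]; exact abs_coord_le hω i
      have : (s * ω i) ^ 2 ≤ s ^ 2 := by
        rw [mul_pow]; exact mul_le_of_le_one_right (sq_nonneg _) h1
      linarith
    simpa using this
  set e : ℝ := -((((m+2 : ℕ):ℝ) - 1) / 2) with he
  have hem : e = -(((m:ℝ)+1)/2) := by rw [he]; push_cast; ring
  have he0 : e < 0 := by rw [hem]; have : (0:ℝ) ≤ m := by positivity
                         linarith
  set C := Real.sqrt C0 + 1 with hC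
  have hCp : 0 < C := by positivity
  have hdecay : ∀ s, 0 < s → |uu ν i s| ≤ C * s ^ e := by
    intro s hs
    have hpos : 0 < s ^ e := Real.rpow_pos_of_pos hs _
    rcases le_total s 1 with h1 | h1
    · have : 1 ≤ s ^ e := Real.one_le_rpow_of_pos_of_le_one_of_nonpos hs h1 he0.le
      have hC1 : 1 ≤ C := by rw [hC]; linarith [Real.sqrt_nonneg C0]
      calc |uu ν i s| ≤ 1 * 1 := by linarith [habs s]
        _ ≤ C * s ^ e := mul_le_mul hC1 this (by norm_num) hCp.le
    · have hsq : (s ^ e) ^ 2 * s ^ (m+1) = 1 := by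
        rw [← Real.rpow_natCast, ← Real.rpow_natCast, ← Real.rpow_mul hs.le, ← Real.rpow_add hs, hem]
        convert Real.rpow_zero s using 2
        push_cast; ring
      have hle : (uu ν i s) ^ 2 ≤ (Real.sqrt C0 * s ^ e) ^ 2 := by
        rw [mul_pow, Real.sq_sqrt hC0]
        calc (uu ν i s) ^ 2 = (s ^ (m+1) * (uu ν i s) ^ 2) * (s ^ e) ^ 2 := by
              linear_combination (-(uu ν i s) ^ 2) * hsq
          _ ≤ C0 * (s ^ e) ^ 2 := by gcongr; exact hdec s h1
      have := abs_le_of_sq_le_sq hle (by positivity)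
      refine this.trans ?_
      gcongr
      rw [hC]; linarith
  have hb : ∃ b, 0 < b ∧ b < 1/2 ∧ ∀ s, 0 ≤ s → -b ≤ uu ν i s := by
    have hlim : Tendsto (fun s : ℝ => C * s ^ e) atTop (𝓝 0) := by
      have := (tendsto_rpow_neg_atTop (y := -e) (by linarith)).const_mul C
      simpa using this
    obtain ⟨B, hB⟩ := (((hlim.eventually (gt_mem_nhds (show (0:ℝ) < 1/4 by norm_num))).and
      (eventually_gt_atTop 0)).exists_forall_of_atTop)
    obtain ⟨s0, hs0, hmin⟩ := (isCompact_Icc (a := (0:ℝ)) (b := max B 0)).exists_isMinOn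
      ⟨0, by simp⟩ hcont.continuousOn
    have hgt := uu_gt h i j hij s0 hs0.1
    refine ⟨max (1/4) (-(uu ν i s0)), by positivity, max_lt (by norm_num) (by linarith), ?_⟩
    intro s hs
    rcases le_total s (max B 0) with h1 | h1
    · have := hmin (show s ∈ Icc 0 (max B 0) from ⟨hs, h1⟩)
      simp only [mem_ofPred_eq] at this
      linarith [le_max_right (1/4) (-(uu ν i s0))]
    · have := hB s (le_trans (le_max_left _ _) h1)
      have h2 := (abs_le.1 (hdecay s this.2)).1
      linarith [le_max_left (1/4) (-(uu ν i s0)), this.1]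
  obtain ⟨b, hb0, hb1, hb2⟩ := hb
  exact ⟨ν, uu ν i, C, b, hν, h.1, uu_unit h i, hcont, hCp, hb0, hb1, hdecay, hb2, hlow, habs⟩



lemma gauss_integrable {d : ℕ} {ε : ℝ} (hε : 0 < ε) :
    Integrable (fun ξ : Euc d => Real.exp (-ε * ‖ξ‖ ^ 2)) := by
  have := GaussianFourier.integrable_cexp_neg_mul_sq_norm_add (V := Euc d) (b := (ε:ℂ))
    (by simpa using hε) 0 0
  have h2 := this.norm
  refine h2.congr (Eventually.of_forall fun ξ => ?_)
  simp only [Complex.norm_exp]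
  congr 1
  simp [← Complex.ofReal_pow]

lemma gauss_formula {d : ℕ} (lam : Measure (Euc d)) [IsFiniteMeasure lam] {ε : ℝ} (hε : 0 < ε) :
    ∫ ξ : Euc d, (charFun lam ξ).re * Real.exp (-ε * ‖ξ‖ ^ 2) =
      (Real.pi / ε) ^ ((d:ℝ)/2) * ∫ z, Real.exp (-(‖z‖ ^ 2 / (4 * ε))) ∂lam := by
  set G : Euc d → Euc d → ℂ := fun ξ z => Complex.exp ((inner ℝ z ξ : ℝ) * Complex.I) *
    (Real.exp (-ε * ‖ξ‖ ^ 2) : ℂ) with hG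
  have hGn : ∀ ξ z, ‖G ξ z‖ = Real.exp (-ε * ‖ξ‖ ^ 2) := by
    intro ξ z
    simp only [hG, norm_mul, Complex.norm_exp_ofReal_mul_I, one_mul, Complex.norm_real,
      Real.norm_eq_abs, abs_of_pos (Real.exp_pos _)]
  have hInt : Integrable (Function.uncurry G) (volume.prod lam) := by
    have h1 : Integrable (fun p : Euc d × Euc d => Real.exp (-ε * ‖p.1‖ ^ 2) * (1:ℝ))
        (volume.prod lam) := (gauss_integrable hε).mul_prod (integrable_const (1:ℝ))
    refine h1.mono' ?_ (Eventually.of_forall fun p => ?_)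
    · refine Continuous.aestronglyMeasurable ?_
      simp only [hG, Function.uncurry_def]
      fun_prop
    · rw [Function.uncurry_def]; simp only; rw [hGn, mul_one]
  have hswap := integral_integral_swap hInt
  have hL : ∀ ξ, ∫ z, G ξ z ∂lam = charFun lam ξ * (Real.exp (-ε * ‖ξ‖ ^ 2) : ℂ) := by
    intro ξ
    simp only [hG]
    rw [integral_mul_const, charFun_apply]
  have hR : ∀ z, ∫ ξ, G ξ z = (((Real.pi / ε) ^ ((d:ℝ)/2) * Real.exp (-(‖z‖ ^ 2 / (4 * ε))) : ℝ) : ℂ) := by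
    intro z
    have := GaussianFourier.integral_cexp_neg_mul_sq_norm_add (V := Euc d) (b := (ε:ℂ))
      (by simpa using hε) Complex.I z
    rw [finrank_euclideanSpace_fin] at this
    have e1 : ∀ ξ, G ξ z = Complex.exp (-(ε:ℂ) * (‖ξ‖:ℂ) ^ 2 + Complex.I * (inner ℝ z ξ : ℝ)) := by
      intro ξ
      simp only [hG]
      rw [Complex.ofReal_exp, ← Complex.exp_add]
      congr 1
      push_cast; ring
    simp only [e1]
    rw [this]
    rw [Complex.ofReal_mul, Complex.ofReal_exp, Complex.ofReal_cpow (by positivity)]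
    congr 1
    · push_cast; rfl
    · congr 1
      rw [Complex.I_sq]; push_cast; ring
  simp only [hL, hR] at hswap
  have hre := congrArg Complex.re hswap
  rw [integral_complex_ofReal, Complex.ofReal_re, integral_const_mul] at hre
  rw [← hre]
  have hI : Integrable (fun ξ => charFun lam ξ * (Real.exp (-ε * ‖ξ‖ ^ 2) : ℂ)) := by
    have := hInt.integral_prod_left
    refine this.congr (Eventually.of_forall fun ξ => ?_)
    exact hL ξ
  have := integral_re hI
  simp only [RCLike.re_eq_complex_re] at this
  rw [← this]
  congr 1; ext ξ
  rw [Complex.re_mul_ofReal]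

/-- squared modulus of the Fourier transform -/
def ph {d : ℕ} (μ : Measure (Euc d)) (ξ : Euc d) : ℝ := ‖charFun μ ξ‖ ^ 2

lemma ph_nonneg {d : ℕ} (μ : Measure (Euc d)) (ξ : Euc d) : 0 ≤ ph μ ξ := by
  unfold ph; positivity

lemma ph_cont {d : ℕ} (μ : Measure (Euc d)) [IsFiniteMeasure μ] : Continuous (ph μ) := by
  unfold ph
  have := continuous_charFun (μ := μ)
  fun_prop

lemma charFun_autocorr {d : ℕ} (μ : Measure (Euc d)) [IsFiniteMeasure μ] (ξ : Euc d) :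
    charFun (μ ∗ (μ.map (fun x => (-1:ℝ) • x))) ξ = (ph μ ξ : ℂ) := by
  rw [charFun_conv, charFun_map_smul]
  simp only [neg_smul, one_smul]
  rw [charFun_neg, Complex.mul_conj, Complex.normSq_eq_norm_sq, ph]

lemma ph_mono_gauss {d : ℕ} (μ' μ : Measure (Euc d)) [IsFiniteMeasure μ'] [IsFiniteMeasure μ]
    (hle : μ' ≤ μ) {ε : ℝ} (hε : 0 < ε) :
    ∫ ξ : Euc d, ph μ' ξ * Real.exp (-ε * ‖ξ‖ ^ 2) ≤
    ∫ ξ : Euc d, ph μ ξ * Real.exp (-ε * ‖ξ‖ ^ 2) := by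
  have h1 := gauss_formula (μ' ∗ (μ'.map (fun x => (-1:ℝ) • x))) hε
  have h2 := gauss_formula (μ ∗ (μ.map (fun x => (-1:ℝ) • x))) hε
  simp only [charFun_autocorr, Complex.ofReal_re] at h1 h2
  rw [h1, h2]
  refine mul_le_mul_of_nonneg_left ?_ (by positivity)
  refine integral_mono_measure ?_ (Eventually.of_forall fun z => (Real.exp_pos _).le) ?_
  · unfold Measure.conv
    refine Measure.map_mono (Measure.prod_mono hle (Measure.map_mono hle ?_)) ?_ <;> fun_prop
  · refine bdd_int _ _ 1 (by fun_prop) (Eventually.of_forall fun z => ?_)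
    rw [abs_of_pos (Real.exp_pos _), Real.exp_le_one_iff]
    have : 0 ≤ ‖z‖ ^ 2 / (4 * ε) := by positivity
    linarith

lemma charFun_le {d : ℕ} (μ : Measure (Euc d)) [IsFiniteMeasure μ] (ξ : Euc d) :
    ph μ ξ ≤ (μ.real univ) ^ 2 := by
  unfold ph
  gcongr
  exact norm_charFun_le ξ

lemma ph_gauss_int {d : ℕ} (μ : Measure (Euc d)) [IsFiniteMeasure μ] {ε : ℝ} (hε : 0 < ε) :
    Integrable (fun ξ : Euc d => ph μ ξ * Real.exp (-ε * ‖ξ‖ ^ 2)) := by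
  refine ((gauss_integrable hε).const_mul ((μ.real univ) ^ 2)).mono' ?_ ?_
  · have := ph_cont μ
    exact Continuous.aestronglyMeasurable (by fun_prop)
  · refine Eventually.of_forall fun ξ => ?_
    rw [Real.norm_eq_abs, abs_of_nonneg (mul_nonneg (ph_nonneg _ _) (Real.exp_pos _).le)]
    gcongr
    exact charFun_le μ ξ

/-- Bessel-type weight -/
def ww {d : ℕ} (a : ℝ) (ξ : Euc d) : ℝ := (1 / (1 + ‖ξ‖ ^ 2)) ^ a

lemma ww_pos {d : ℕ} (a : ℝ) (ξ : Euc d) : 0 < ww a ξ := by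
  unfold ww; positivity

lemma ww_cont {d : ℕ} (a : ℝ) : Continuous (ww (d := d) a) := by
  unfold ww
  refine Continuous.rpow_const ?_ (fun ξ => Or.inl (by positivity))
  refine continuous_const.div (by fun_prop) (fun ξ => by positivity)

lemma ww_formula {d : ℕ} {a : ℝ} (ha : 0 < a) (ξ : Euc d) :
    ENNReal.ofReal (Real.Gamma a) * ENNReal.ofReal (ww a ξ) =
    ∫⁻ t in Ioi (0:ℝ), ENNReal.ofReal (t ^ (a - 1) * Real.exp (-((1 + ‖ξ‖^2) * t))) := by
  have hr : 0 < 1 + ‖ξ‖ ^ 2 := by positivity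
  have h := Real.integral_rpow_mul_exp_neg_mul_Ioi ha hr
  have hG := Real.Gamma_pos_of_pos ha
  rw [← ENNReal.ofReal_mul hG.le, ww, mul_comm, ← h]
  refine ofReal_integral_eq_lintegral_ofReal ?_ ?_
  · by_contra hn
    rw [integral_undef hn] at h
    have : 0 < (1 / (1 + ‖ξ‖ ^ 2)) ^ a * Real.Gamma a := by positivity
    linarith
  · rw [Filter.EventuallyLE, ae_restrict_iff' measurableSet_Ioi]
    exact Eventually.of_forall fun t (ht : 0 < t) => by
      simp only [Pi.zero_apply]; positivity

lemma ph_ww_formula {d : ℕ} (μ : Measure (Euc d)) [IsFiniteMeasure μ] {a : ℝ} (ha : 0 < a) :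
    ENNReal.ofReal (Real.Gamma a) * ∫⁻ ξ : Euc d, ENNReal.ofReal (ph μ ξ * ww a ξ) =
    ∫⁻ t in Ioi (0:ℝ), ENNReal.ofReal (t ^ (a - 1) * Real.exp (-t)) *
      ENNReal.ofReal (∫ ξ : Euc d, ph μ ξ * Real.exp (-t * ‖ξ‖ ^ 2)) := by
  have hm := (ph_cont μ).measurable
  have hw := (ww_cont (d := d) a).measurable
  rw [← lintegral_const_mul _ (by fun_prop)]
  have e1 : ∀ ξ : Euc d, ENNReal.ofReal (Real.Gamma a) * ENNReal.ofReal (ph μ ξ * ww a ξ) =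
      ∫⁻ t in Ioi (0:ℝ), ENNReal.ofReal (ph μ ξ) *
        ENNReal.ofReal (t ^ (a - 1) * Real.exp (-((1 + ‖ξ‖^2) * t))) := by
    intro ξ
    rw [lintegral_const_mul _ (by fun_prop), ← ww_formula ha, ENNReal.ofReal_mul (ph_nonneg _ _)]
    ring
  simp only [e1]
  rw [lintegral_lintegral_swap (by fun_prop)]
  refine setLIntegral_congr_fun measurableSet_Ioi fun t (ht : 0 < t) => ?_
  rw [ofReal_integral_eq_lintegral_ofReal (ph_gauss_int μ ht)
    (Eventually.of_forall fun ξ => mul_nonneg (ph_nonneg _ _) (Real.exp_pos _).le),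
    ← lintegral_const_mul _ (by fun_prop)]
  refine lintegral_congr fun ξ => ?_
  rw [← ENNReal.ofReal_mul (ph_nonneg _ _), ← ENNReal.ofReal_mul (by positivity)]
  congr 1
  have : Real.exp (-((1 + ‖ξ‖^2) * t)) = Real.exp (-t) * Real.exp (-t * ‖ξ‖ ^ 2) := by
    rw [← Real.exp_add]; congr 1; ring
  rw [this]; ring

lemma ph_ww_mono {d : ℕ} (μ' μ : Measure (Euc d)) [IsFiniteMeasure μ'] [IsFiniteMeasure μ]
    (hle : μ' ≤ μ) {a : ℝ} (ha : 0 < a) :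
    ∫⁻ ξ : Euc d, ENNReal.ofReal (ph μ' ξ * ww a ξ) ≤
    ∫⁻ ξ : Euc d, ENNReal.ofReal (ph μ ξ * ww a ξ) := by
  have hG := Real.Gamma_pos_of_pos ha
  have h0 : ENNReal.ofReal (Real.Gamma a) ≠ 0 := by simpa using hG
  rw [← ENNReal.mul_le_mul_iff_right h0 ENNReal.ofReal_ne_top, ph_ww_formula μ' ha,
    ph_ww_formula μ ha]
  refine setLIntegral_mono' measurableSet_Ioi fun t (ht : 0 < t) => ?_
  exact mul_le_mul' le_rfl (ENNReal.ofReal_le_ofReal (ph_mono_gauss μ' μ hle ht))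

lemma ae_conv {d : ℕ} {μ ν : Measure (Euc d)} [SFinite μ] [SFinite ν] {p : Euc d → Prop}
    (hp : MeasurableSet {z | p z}) (h : ∀ᵐ x ∂μ, ∀ᵐ y ∂ν, p (x + y)) :
    ∀ᵐ z ∂(μ ∗ ν), p z := by
  unfold Measure.conv
  rw [ae_map_iff (by fun_prop) hp]
  rw [Measure.ae_prod_iff_ae_ae (p := fun q : Euc d × Euc d => p (q.1 + q.2))]
  · exact h
  · exact (measurable_fst.add measurable_snd) hp

lemma small_gauss {d : ℕ} {ν : Measure (Euc d)} [IsProbabilityMeasure ν] {u : ℝ → ℝ}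
    (hν : ∀ᵐ ω ∂ν, ‖ω‖ = 1) (hu : ∀ ξ : Euc d, ∫ ω, Real.cos (inner ℝ ω ξ) ∂ν = u ‖ξ‖)
    (μ : Measure (Euc d)) [IsFiniteMeasure μ] (K : Set (Euc d)) (hK : IsCompact K)
    (hμK : ∀ᵐ x ∂μ, x ∈ K) {r : ℝ} (hr : 0 < r) (hrK : ∀ x ∈ K, ∀ y ∈ K, dist x y ≠ r)
    {τ : ℝ} (hτ : 0 < τ) :
    ∃ ε, 0 < ε ∧ ε ≤ τ ∧
      ∫ ξ : Euc d, ph μ ξ * u (r * ‖ξ‖) * Real.exp (-ε * ‖ξ‖ ^ 2) ≤ τ := by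
  -- a gap
  obtain ⟨η, hη, hgap⟩ : ∃ η, 0 < η ∧ ∀ x ∈ K, ∀ y ∈ K, η ≤ |dist x y - r| := by
    have hc : IsClosed ((fun p : Euc d × Euc d => dist p.1 p.2) '' (K ×ˢ K)) :=
      ((hK.prod hK).image (by fun_prop)).isClosed
    have hn : r ∈ ((fun p : Euc d × Euc d => dist p.1 p.2) '' (K ×ˢ K))ᶜ := by
      rintro ⟨⟨x, y⟩, ⟨hx, hy⟩, hxy⟩
      exact hrK x hx y hy hxy
    obtain ⟨η, hη, hb⟩ := Metric.isOpen_iff.1 hc.isOpen_compl r hn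
    refine ⟨η, hη, fun x hx y hy => ?_⟩
    by_contra! hlt
    exact hb (show dist x y ∈ ball r η by rw [mem_ball, Real.dist_eq]; exact hlt)
      ⟨(x, y), ⟨hx, hy⟩, rfl⟩
  set lam : Measure (Euc d) := (μ ∗ (μ.map (fun x => (-1:ℝ) • x))) ∗ (ν.map (fun x => r • x))
    with hlam
  have hre : ∀ ξ, (charFun lam ξ).re = ph μ ξ * u (r * ‖ξ‖) := by
    intro ξ
    rw [hlam, charFun_conv, charFun_autocorr, charFun_map_smul, Complex.re_ofReal_mul]
    congr 1
    have hn : r * ‖ξ‖ = ‖r • ξ‖ := by rw [norm_smul, Real.norm_of_nonneg hr.le]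
    rw [hn, ← hu, charFun_apply]
    have hI : Integrable (fun ω : Euc d => Complex.exp ((inner ℝ ω (r • ξ) : ℝ) * Complex.I)) ν := by
      refine Integrable.of_bound (Continuous.aestronglyMeasurable (by fun_prop)) 1
        (Eventually.of_forall fun ω => ?_)
      rw [Complex.norm_exp_ofReal_mul_I]
    have := integral_re hI
    simp only [RCLike.re_eq_complex_re, Complex.exp_ofReal_mul_I_re] at this
    exact this.symm
  have hae : ∀ᵐ z ∂lam, η ≤ ‖z‖ := by
    refine ae_conv (measurableSet_le measurable_const measurable_norm) ?_
    have h1 : ∀ᵐ w ∂(μ ∗ (μ.map (fun x => (-1:ℝ) • x))), η ≤ |‖w‖ - r| := by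
      refine ae_conv (measurableSet_le measurable_const (by fun_prop)) ?_
      filter_upwards [hμK] with x hx
      rw [ae_map_iff (by fun_prop) (measurableSet_le measurable_const (by fun_prop))]
      filter_upwards [hμK] with y hy
      have := hgap x hx y hy
      rw [dist_eq_norm] at this
      simpa [sub_eq_add_neg] using this
    filter_upwards [h1] with w hw
    rw [ae_map_iff (by fun_prop) (measurableSet_le measurable_const (by fun_prop))]
    filter_upwards [hν] with ω hω
    refine hw.trans ?_
    have h2 := abs_norm_sub_norm_le w (-(r • ω))
    rw [norm_neg, norm_smul, hω, Real.norm_of_nonneg hr.le, mul_one, sub_neg_eq_add] at h2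
    exact h2
  set m : ℝ := lam.real univ
  have hlim : Tendsto (fun x : ℝ => Real.pi ^ ((d:ℝ)/2) * m *
      (x ^ ((d:ℝ)/2) * Real.exp (-(η ^ 2 / 4) * x))) atTop (𝓝 0) := by
    have := (tendsto_rpow_mul_exp_neg_mul_atTop_nhds_zero ((d:ℝ)/2) (η ^ 2 / 4)
      (by positivity)).const_mul (Real.pi ^ ((d:ℝ)/2) * m)
    simpa using this
  obtain ⟨x, hx1, hx2, hx3⟩ := ((hlim.eventually (gt_mem_nhds hτ)).and
    ((eventually_gt_atTop (0:ℝ)).and (eventually_ge_atTop (1/τ)))).exists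
  have hε : 0 < x⁻¹ := inv_pos.2 hx2
  refine ⟨x⁻¹, hε, ?_, ?_⟩
  · rw [inv_le_comm₀ hx2 hτ]; simpa using hx3
  · have hf := gauss_formula lam hε
    simp only [hre] at hf
    rw [hf]
    refine le_trans ?_ hx1.le
    have hle : ∫ z, Real.exp (-(‖z‖ ^ 2 / (4 * x⁻¹))) ∂lam ≤ ∫ _z, Real.exp (-(η ^ 2 / 4) * x) ∂lam := by
      refine integral_mono_ae ?_ (integrable_const _) ?_
      · refine bdd_int _ _ 1 (by fun_prop) (Eventually.of_forall fun z => ?_)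
        rw [abs_of_pos (Real.exp_pos _), Real.exp_le_one_iff]
        have : 0 ≤ ‖z‖ ^ 2 / (4 * x⁻¹) := by positivity
        linarith
      · filter_upwards [hae] with z hz
        rw [Real.exp_le_exp]
        have h1 : ‖z‖ ^ 2 / (4 * x⁻¹) = ‖z‖ ^ 2 / 4 * x := by field_simp
        have h2 : η ^ 2 ≤ ‖z‖ ^ 2 := by gcongr
        rw [h1]
        nlinarith
    rw [integral_const, smul_eq_mul] at hle
    calc _ ≤ (Real.pi / x⁻¹) ^ ((d:ℝ)/2) * (m * Real.exp (-(η ^ 2 / 4) * x)) := by gcongr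
      _ = _ := by
        rw [div_inv_eq_mul, Real.mul_rpow Real.pi_pos.le hx2.le]; ring



lemma exists_compact_approx {d : ℕ} (μ : Measure (Euc d)) [IsProbabilityMeasure μ]
    (E : Set (Euc d)) (hE : μ Eᶜ = 0) {t : ℝ} (ht : 0 < t) :
    ∃ K ⊆ E, IsCompact K ∧ μ.real Kᶜ ≤ t := by
  set A := (toMeasurable μ Eᶜ)ᶜ with hA
  have hAm : MeasurableSet A := (measurableSet_toMeasurable _ _).compl
  have hAE : A ⊆ E := by
    rw [hA, compl_subset_comm]; exact subset_toMeasurable _ _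
  have hA1 : μ A = 1 := by
    rw [hA, prob_compl_eq_one_iff (measurableSet_toMeasurable _ _), measure_toMeasurable, hE]
  obtain ⟨K, hKA, hK, hlt⟩ := hAm.exists_lt_isCompact (μ := μ) (r := 1 - ENNReal.ofReal t)
    (by rw [hA1]; exact ENNReal.sub_lt_self ENNReal.one_ne_top one_ne_zero (by simpa using ht))
  refine ⟨K, hKA.trans hAE, hK, ?_⟩
  have : μ Kᶜ ≤ ENNReal.ofReal t := by
    rw [prob_compl_eq_one_sub hK.measurableSet]
    rw [tsub_le_iff_right, add_comm]
    exact tsub_le_iff_right.1 hlt.le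
  exact ENNReal.toReal_le_of_le_ofReal ht.le this

lemma charFun_restrict_sub {d : ℕ} (μ : Measure (Euc d)) [IsProbabilityMeasure μ]
    (K : Set (Euc d)) (hK : MeasurableSet K) (ξ : Euc d) :
    ‖charFun (μ.restrict K) ξ - charFun μ ξ‖ ≤ μ.real Kᶜ := by
  have hI : Integrable (fun x : Euc d => Complex.exp ((inner ℝ x ξ : ℝ) * Complex.I)) μ := by
    refine Integrable.of_bound (Continuous.aestronglyMeasurable (by fun_prop)) 1
      (Eventually.of_forall fun ω => ?_)
    rw [Complex.norm_exp_ofReal_mul_I]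
  have h := integral_add_compl hK hI
  rw [charFun_apply, charFun_apply, ← h, sub_add_cancel_left, norm_neg]
  have := norm_integral_le_of_norm_le_const (μ := μ.restrict Kᶜ)
    (f := fun x : Euc d => Complex.exp ((inner ℝ x ξ : ℝ) * Complex.I)) (C := 1)
    (Eventually.of_forall fun ω => by rw [Complex.norm_exp_ofReal_mul_I])
  simpa using this

lemma fatou_main {d : ℕ} {ν : Measure (Euc d)} [IsProbabilityMeasure ν] {u : ℝ → ℝ}
    (hν : ∀ᵐ ω ∂ν, ‖ω‖ = 1) (hu : ∀ ξ : Euc d, ∫ ω, Real.cos (inner ℝ ω ξ) ∂ν = u ‖ξ‖)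
    (huc : Continuous u)
    (μ : Measure (Euc d)) [IsProbabilityMeasure μ] (E : Set (Euc d)) (hE : μ Eᶜ = 0)
    {r : ℝ} (hr : 0 < r) (hrE : r ∉ distSet E E) {a C : ℝ} (ha : 0 < a) (hC : 0 ≤ C)
    (hCw : ∀ ξ : Euc d, |u (r * ‖ξ‖)| ≤ C * ww a ξ)
    (hfin : ∫⁻ ξ : Euc d, ENNReal.ofReal (ph μ ξ * ww a ξ) ≠ ∞) :
    Integrable (fun ξ : Euc d => ph μ ξ * u (r * ‖ξ‖)) ∧
      ∫ ξ : Euc d, ph μ ξ * u (r * ‖ξ‖) ≤ 0 := by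
  have hpc := ph_cont μ
  have hwc := ww_cont (d := d) a
  have hInt : ∀ μ' : Measure (Euc d), IsFiniteMeasure μ' → μ' ≤ μ →
      Integrable (fun ξ : Euc d => ph μ' ξ * ww a ξ) := by
    intro μ' hf hle
    have := ph_cont μ'
    refine (lintegral_ofReal_ne_top_iff_integrable
      (Continuous.aestronglyMeasurable (by fun_prop))
      (Eventually.of_forall fun ξ => mul_nonneg (ph_nonneg _ _) (ww_pos _ _).le)).1 ?_
    exact ne_top_of_le_ne_top hfin (ph_ww_mono μ' μ hle ha)
  have hIntU : ∀ μ' : Measure (Euc d), IsFiniteMeasure μ' → μ' ≤ μ →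
      Integrable (fun ξ : Euc d => ph μ' ξ * u (r * ‖ξ‖)) := by
    intro μ' hf hle
    have := ph_cont μ'
    refine ((hInt μ' hf hle).const_mul C).mono' (Continuous.aestronglyMeasurable (by fun_prop))
      (Eventually.of_forall fun ξ => ?_)
    rw [Real.norm_eq_abs, abs_mul, abs_of_nonneg (ph_nonneg _ _)]
    calc ph μ' ξ * |u (r * ‖ξ‖)| ≤ ph μ' ξ * (C * ww a ξ) :=
          mul_le_mul_of_nonneg_left (hCw ξ) (ph_nonneg _ _)
      _ = _ := by ring
  refine ⟨hIntU μ inferInstance le_rfl, ?_⟩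
  have htn : ∀ n : ℕ, (0:ℝ) < 1 / ((n:ℝ) + 1) := fun n => by positivity
  choose K hKE hKc hKμ using fun n : ℕ => exists_compact_approx μ E hE (htn n)
  set μn : ℕ → Measure (Euc d) := fun n => μ.restrict (K n) with hμn
  have hle : ∀ n, μn n ≤ μ := fun n => Measure.restrict_le_self
  have hsm : ∀ n : ℕ, ∃ ε, 0 < ε ∧ ε ≤ 1 / ((n:ℝ) + 1) ∧
      ∫ ξ : Euc d, ph (μn n) ξ * u (r * ‖ξ‖) * Real.exp (-ε * ‖ξ‖ ^ 2) ≤ 1 / ((n:ℝ) + 1) := by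
    intro n
    refine small_gauss hν hu (μn n) (K n) (hKc n) (ae_restrict_mem (hKc n).measurableSet) hr ?_ (htn n)
    intro x hx y hy hxy
    exact hrE ⟨x, hKE n hx, y, hKE n hy, hxy⟩
  choose ε hε0 hε1 hε2 using hsm
  have hlim0 : Tendsto (fun n : ℕ => 1 / ((n:ℝ) + 1)) atTop (𝓝 0) :=
    tendsto_one_div_add_atTop_nhds_zero_nat
  have hεlim : Tendsto ε atTop (𝓝 0) :=
    squeeze_zero (fun n => (hε0 n).le) hε1 hlim0
  set Φ := ∫⁻ ξ : Euc d, ENNReal.ofReal (ph μ ξ * ww a ξ) with hΦ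
  set f : ℕ → Euc d → ℝ≥0∞ := fun n ξ => ENNReal.ofReal
    (ph (μn n) ξ * (C * ww a ξ + u (r * ‖ξ‖)) * Real.exp (-(ε n) * ‖ξ‖ ^ 2)) with hf
  have hpos : ∀ ξ : Euc d, 0 ≤ C * ww a ξ + u (r * ‖ξ‖) := by
    intro ξ; linarith [(abs_le.1 (hCw ξ)).1]
  have hexp1 : ∀ (n : ℕ) (ξ : Euc d), Real.exp (-(ε n) * ‖ξ‖ ^ 2) ≤ 1 := by
    intro n ξ
    rw [Real.exp_le_one_iff]
    have := mul_nonneg (hε0 n).le (sq_nonneg ‖ξ‖)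
    linarith
  have hfle : ∀ n, ∫⁻ ξ, f n ξ ≤ ENNReal.ofReal C * Φ + ENNReal.ofReal (1 / ((n:ℝ) + 1)) := by
    intro n
    have hc := ph_cont (μn n)
    have hi1 : Integrable (fun ξ : Euc d => C * (ph (μn n) ξ * ww a ξ) *
        Real.exp (-(ε n) * ‖ξ‖ ^ 2)) := by
      refine ((hInt (μn n) inferInstance (hle n)).const_mul C).mono'
        (Continuous.aestronglyMeasurable (by fun_prop)) (Eventually.of_forall fun ξ => ?_)
      have h0 : 0 ≤ C * (ph (μn n) ξ * ww a ξ) :=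
        mul_nonneg hC (mul_nonneg (ph_nonneg _ _) (ww_pos _ _).le)
      rw [Real.norm_eq_abs, abs_of_nonneg (mul_nonneg h0 (Real.exp_pos _).le)]
      exact mul_le_of_le_one_right h0 (hexp1 n ξ)
    have hi2 : Integrable (fun ξ : Euc d => ph (μn n) ξ * u (r * ‖ξ‖) *
        Real.exp (-(ε n) * ‖ξ‖ ^ 2)) := by
      refine (hIntU (μn n) inferInstance (hle n)).norm.mono'
        (Continuous.aestronglyMeasurable (by fun_prop)) (Eventually.of_forall fun ξ => ?_)
      rw [norm_mul, Real.norm_of_nonneg (Real.exp_pos _).le]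
      exact mul_le_of_le_one_right (norm_nonneg _) (hexp1 n ξ)
    have heq : ∫⁻ ξ, f n ξ = ENNReal.ofReal (∫ ξ : Euc d, (C * (ph (μn n) ξ * ww a ξ) *
        Real.exp (-(ε n) * ‖ξ‖ ^ 2) + ph (μn n) ξ * u (r * ‖ξ‖) *
        Real.exp (-(ε n) * ‖ξ‖ ^ 2))) := by
      have hi12 : Integrable (fun ξ : Euc d => C * (ph (μn n) ξ * ww a ξ) *
        Real.exp (-(ε n) * ‖ξ‖ ^ 2) + ph (μn n) ξ * u (r * ‖ξ‖) *
        Real.exp (-(ε n) * ‖ξ‖ ^ 2)) := hi1.add hi2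
      rw [ofReal_integral_eq_lintegral_ofReal hi12]
      · refine lintegral_congr fun ξ => ?_
        simp only [hf]; congr 1; ring
      · refine Eventually.of_forall fun ξ => ?_
        have := mul_nonneg (mul_nonneg (ph_nonneg (μn n) ξ) (hpos ξ))
          (Real.exp_pos (-(ε n) * ‖ξ‖ ^ 2)).le
        simp only [Pi.zero_apply]
        linarith
    rw [heq, integral_add hi1 hi2]
    refine ENNReal.ofReal_add_le.trans (add_le_add ?_ (ENNReal.ofReal_le_ofReal (hε2 n)))
    rw [ofReal_integral_eq_lintegral_ofReal hi1 (Eventually.of_forall fun ξ =>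
      mul_nonneg (mul_nonneg hC (mul_nonneg (ph_nonneg _ _) (ww_pos _ _).le)) (Real.exp_pos _).le)]
    calc _ ≤ ∫⁻ ξ, ENNReal.ofReal C * ENNReal.ofReal (ph (μn n) ξ * ww a ξ) := by
          refine lintegral_mono fun ξ => ?_
          rw [← ENNReal.ofReal_mul hC]
          exact ENNReal.ofReal_le_ofReal (mul_le_of_le_one_right
            (mul_nonneg hC (mul_nonneg (ph_nonneg _ _) (ww_pos _ _).le)) (hexp1 n ξ))
      _ = ENNReal.ofReal C * ∫⁻ ξ, ENNReal.ofReal (ph (μn n) ξ * ww a ξ) :=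
          lintegral_const_mul _ (Measurable.ennreal_ofReal (Continuous.measurable (by fun_prop)))
      _ ≤ ENNReal.ofReal C * Φ := mul_le_mul' le_rfl (ph_ww_mono _ _ (hle n) ha)
  have hphlim : ∀ ξ, Tendsto (fun n => ph (μn n) ξ) atTop (𝓝 (ph μ ξ)) := by
    intro ξ
    have h1 : Tendsto (fun n => charFun (μn n) ξ) atTop (𝓝 (charFun μ ξ)) := by
      rw [tendsto_iff_norm_sub_tendsto_zero]
      exact squeeze_zero (fun n => norm_nonneg _)
        (fun n => (charFun_restrict_sub μ (K n) (hKc n).measurableSet ξ).trans (hKμ n)) hlim0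
    exact h1.norm.pow 2
  have hflim : ∀ ξ, Tendsto (fun n => f n ξ) atTop
      (𝓝 (ENNReal.ofReal (ph μ ξ * (C * ww a ξ + u (r * ‖ξ‖))))) := by
    intro ξ
    refine ENNReal.tendsto_ofReal ?_
    have h2 : Tendsto (fun n => Real.exp (-(ε n) * ‖ξ‖ ^ 2)) atTop (𝓝 1) := by
      have := (Real.continuous_exp.tendsto _).comp ((hεlim.neg).mul_const (‖ξ‖ ^ 2))
      simpa [Function.comp_def] using this
    have := ((hphlim ξ).mul_const (C * ww a ξ + u (r * ‖ξ‖))).mul h2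
    simpa using this
  have hfat := lintegral_liminf_le (μ := (volume : Measure (Euc d))) (u := atTop) (f := f)
    (fun n => by
      have hc := ph_cont (μn n)
      exact Measurable.ennreal_ofReal (Continuous.measurable (by fun_prop)))
  have hE1 : ∀ ξ, liminf (fun n => f n ξ) atTop =
      ENNReal.ofReal (ph μ ξ * (C * ww a ξ + u (r * ‖ξ‖))) := fun ξ => (hflim ξ).liminf_eq
  simp only [hE1] at hfat
  have hup : liminf (fun n => ∫⁻ ξ, f n ξ) atTop ≤ ENNReal.ofReal C * Φ := by
    have hl : Tendsto (fun n : ℕ => ENNReal.ofReal C * Φ + ENNReal.ofReal (1 / ((n:ℝ) + 1))) atTop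
        (𝓝 (ENNReal.ofReal C * Φ + ENNReal.ofReal 0)) :=
      (ENNReal.tendsto_ofReal hlim0).const_add _
    rw [ENNReal.ofReal_zero, add_zero] at hl
    rw [← hl.liminf_eq]
    exact liminf_le_liminf (Eventually.of_forall hfle)
  have hfinal := hfat.trans hup
  have hi1 := hInt μ inferInstance le_rfl
  have hi2 := hIntU μ inferInstance le_rfl
  have hΦ2 : ENNReal.ofReal C * Φ = ENNReal.ofReal (C * ∫ ξ : Euc d, ph μ ξ * ww a ξ) := by
    rw [ENNReal.ofReal_mul hC, hΦ, ofReal_integral_eq_lintegral_ofReal hi1]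
    exact Eventually.of_forall fun ξ => mul_nonneg (ph_nonneg _ _) (ww_pos _ _).le
  have hsum : Integrable (fun ξ : Euc d => ph μ ξ * (C * ww a ξ + u (r * ‖ξ‖))) := by
    refine ((hi1.const_mul C).add hi2).congr (Eventually.of_forall fun ξ => ?_)
    simp only [Pi.add_apply]; ring
  rw [hΦ2, ← ofReal_integral_eq_lintegral_ofReal hsum (Eventually.of_forall fun ξ =>
    mul_nonneg (ph_nonneg _ _) (hpos ξ)), ENNReal.ofReal_le_ofReal_iff (mul_nonneg hC
    (integral_nonneg fun ξ => mul_nonneg (ph_nonneg _ _) (ww_pos _ _).le))] at hfinal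
  have : ∫ ξ : Euc d, ph μ ξ * (C * ww a ξ + u (r * ‖ξ‖)) =
      C * (∫ ξ : Euc d, ph μ ξ * ww a ξ) + ∫ ξ : Euc d, ph μ ξ * u (r * ‖ξ‖) := by
    rw [← integral_const_mul, ← integral_add (hi1.const_mul C) hi2]
    congr 1; ext ξ; ring
  linarith

lemma norm_fourierM {d : ℕ} (μ : Measure (Euc d)) (ξ : Euc d) : ‖fourierM μ ξ‖ ^ 2 = ph μ ξ := by
  have : fourierM μ ξ = charFun μ (-ξ) := by
    rw [fourierM, charFun_apply]
    congr 1; ext x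
    rw [inner_neg_right]; push_cast; ring_nf
  rw [this, charFun_neg, RCLike.norm_conj, ph]

lemma FmuInt_eq {d : ℕ} (μ : Measure (Euc d)) (T : ℝ) :
    FmuInt μ T = ∫ ξ in {ξ : Euc d | ‖ξ‖ ≤ T}, ph μ ξ := by
  simp only [FmuInt, norm_fourierM]

lemma ms_ball {d : ℕ} (T : ℝ) : MeasurableSet {ξ : Euc d | ‖ξ‖ ≤ T} :=
  measurableSet_le measurable_norm measurable_const

lemma ph_intOn {d : ℕ} (μ : Measure (Euc d)) [IsFiniteMeasure μ] (T : ℝ) :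
    IntegrableOn (ph μ) {ξ : Euc d | ‖ξ‖ ≤ T} := by
  have : {ξ : Euc d | ‖ξ‖ ≤ T} = closedBall 0 T := by ext; simp
  rw [this]
  exact (ph_cont μ).continuousOn.integrableOn_compact (isCompact_closedBall _ _)

lemma FmuInt_nonneg {d : ℕ} (μ : Measure (Euc d)) (T : ℝ) : 0 ≤ FmuInt μ T := by
  rw [FmuInt_eq]; exact integral_nonneg fun ξ => ph_nonneg _ _

lemma FmuInt_mono {d : ℕ} (μ : Measure (Euc d)) [IsFiniteMeasure μ] {S T : ℝ} (h : S ≤ T) :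
    FmuInt μ S ≤ FmuInt μ T := by
  rw [FmuInt_eq, FmuInt_eq]
  exact setIntegral_mono_set (ph_intOn μ T) (Eventually.of_forall fun ξ => ph_nonneg _ _)
    (LE.le.eventuallyLE fun ξ (hξ : ‖ξ‖ ≤ S) => hξ.trans h)

lemma FmuInt_lint {d : ℕ} (μ : Measure (Euc d)) [IsFiniteMeasure μ] (T : ℝ) :
    ENNReal.ofReal (FmuInt μ T) = ∫⁻ ξ in {ξ : Euc d | ‖ξ‖ ≤ T}, ENNReal.ofReal (ph μ ξ) := by
  rw [FmuInt_eq]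
  exact ofReal_integral_eq_lintegral_ofReal (ph_intOn μ T)
    (Eventually.of_forall fun ξ => ph_nonneg _ _)

lemma tail_bound {d : ℕ} (μ : Measure (Euc d)) [IsFiniteMeasure μ] {c a T₀ S A : ℝ}
    (hca : c < a) (ha : 0 < a) (hT₀ : 1 ≤ T₀) (hS : T₀ ≤ S) (hA : T₀ ≤ A)
    (hg : ∀ T₁ T₂ : ℝ, T₀ ≤ T₁ → T₀ ≤ T₂ → FmuInt μ (T₁ * T₂) ≤ T₁ ^ c * FmuInt μ T₂) :
    ∫⁻ ξ in {ξ : Euc d | A * S < ‖ξ‖}, ENNReal.ofReal (ph μ ξ * ‖ξ‖ ^ (-a)) ≤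
      ENNReal.ofReal (S ^ (-a) * A ^ (c - a) * 2 ^ c * FmuInt μ S * (1 - 2 ^ (c - a))⁻¹) := by
  have hS0 : 0 < S := by linarith
  have hA0 : 0 < A := by linarith
  set B := A * S with hB
  have hB0 : 0 < B := by positivity
  have hpc := ph_cont μ
  have hms : MeasurableSet {ξ : Euc d | B < ‖ξ‖} := measurableSet_lt measurable_const measurable_norm
  have hpt : ∀ ξ : Euc d, ({ξ : Euc d | B < ‖ξ‖}.indicator
      (fun ξ => ENNReal.ofReal (ph μ ξ * ‖ξ‖ ^ (-a)))) ξ ≤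
      ∑' k : ℕ, ENNReal.ofReal ((2 ^ k * B) ^ (-a)) *
        ({ξ : Euc d | ‖ξ‖ ≤ 2 ^ (k+1) * B}.indicator (fun ξ => ENNReal.ofReal (ph μ ξ))) ξ := by
    intro ξ
    by_cases hξ : B < ‖ξ‖
    · obtain ⟨k, hk1, hk2⟩ := exists_nat_pow_near (x := ‖ξ‖ / B) (y := 2)
        ((one_le_div hB0).2 hξ.le) (by norm_num)
      rw [le_div_iff₀ hB0] at hk1
      rw [div_lt_iff₀ hB0] at hk2
      refine le_trans ?_ (ENNReal.le_tsum k)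
      rw [indicator_of_mem (show ξ ∈ {ξ : Euc d | B < ‖ξ‖} from hξ),
        indicator_of_mem (show ξ ∈ {ξ : Euc d | ‖ξ‖ ≤ 2 ^ (k+1) * B} from hk2.le),
        ← ENNReal.ofReal_mul (by positivity)]
      refine ENNReal.ofReal_le_ofReal ?_
      rw [mul_comm]
      refine mul_le_mul_of_nonneg_right ?_ (ph_nonneg _ _)
      exact Real.rpow_le_rpow_of_nonpos (by positivity) hk1 (by linarith)
    · rw [indicator_of_notMem (show ξ ∉ {ξ : Euc d | B < ‖ξ‖} from hξ)]
      exact zero_le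
  rw [← lintegral_indicator hms]
  refine (lintegral_mono hpt).trans ?_
  rw [lintegral_tsum (fun k => by
    refine AEMeasurable.const_mul (Measurable.aemeasurable ?_) _
    exact (Measurable.ennreal_ofReal hpc.measurable).indicator (ms_ball _))]
  set q : ℝ := 2 ^ (c - a) with hq
  have hq0 : 0 < q := by positivity
  have hq1 : q < 1 := Real.rpow_lt_one_of_one_lt_of_neg (by norm_num) (by linarith)
  set D := S ^ (-a) * A ^ (c - a) * 2 ^ c * FmuInt μ S with hD
  have hD0 : 0 ≤ D := by have := FmuInt_nonneg μ S; positivity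
  have hterm : ∀ k : ℕ, ∫⁻ ξ : Euc d, ENNReal.ofReal ((2 ^ k * B) ^ (-a)) *
        ({ξ : Euc d | ‖ξ‖ ≤ 2 ^ (k+1) * B}.indicator (fun ξ => ENNReal.ofReal (ph μ ξ))) ξ
      ≤ ENNReal.ofReal (D * q ^ k) := by
    intro k
    rw [lintegral_const_mul _ ((Measurable.ennreal_ofReal hpc.measurable).indicator (ms_ball _)),
      lintegral_indicator (ms_ball _), ← FmuInt_lint, ← ENNReal.ofReal_mul (by positivity)]
    refine ENNReal.ofReal_le_ofReal ?_
    have h2 : (1:ℝ) ≤ 2 ^ (k+1) := one_le_pow₀ (by norm_num)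
    have h1 := hg (2 ^ (k+1) * A) S (by nlinarith) hS
    have e1 : (2:ℝ) ^ (k+1) * B = 2 ^ (k+1) * A * S := by rw [hB]; ring
    rw [e1]
    refine (mul_le_mul_of_nonneg_left h1 (by positivity)).trans (le_of_eq ?_)
    have hk0 : (0:ℝ) < 2 ^ k := by positivity
    have e2 : q ^ k = ((2:ℝ) ^ k) ^ c * ((2:ℝ) ^ k) ^ (-a) := by
      rw [← Real.rpow_add hk0, hq, ← Real.rpow_natCast, ← Real.rpow_natCast, ← Real.rpow_mul (by norm_num),
        ← Real.rpow_mul (by norm_num)]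
      congr 1; ring
    have e3 : A ^ (c - a) = A ^ c * A ^ (-a) := by rw [← Real.rpow_add hA0]; congr 1
    rw [hD, e2, e3, hB, Real.mul_rpow hk0.le (by positivity), Real.mul_rpow hA0.le hS0.le,
      Real.mul_rpow (by positivity) hA0.le, pow_succ, Real.mul_rpow hk0.le (by norm_num)]
    ring
  refine (ENNReal.tsum_le_tsum hterm).trans (le_of_eq ?_)
  rw [← ENNReal.ofReal_tsum_of_nonneg (fun k => by positivity)
    ((summable_geometric_of_lt_one hq0.le hq1).mul_left D), tsum_mul_left,
    tsum_geometric_of_lt_one hq0.le hq1]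



lemma ww_le {d : ℕ} {a : ℝ} (ha : 0 < a) (ξ : Euc d) (hξ : 0 < ‖ξ‖) :
    ww (a / 2) ξ ≤ ‖ξ‖ ^ (-a) := by
  have h1 : ‖ξ‖ ^ (-a) = (1 / ‖ξ‖ ^ 2) ^ (a / 2) := by
    rw [one_div, Real.inv_rpow (by positivity), ← Real.rpow_natCast, ← Real.rpow_mul hξ.le,
      ← Real.rpow_neg hξ.le]
    congr 1; push_cast; ring
  rw [h1, ww]
  refine Real.rpow_le_rpow (by positivity) ?_ (by positivity)
  exact one_div_le_one_div_of_le (by positivity) (by linarith)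

lemma ww_le_one {d : ℕ} {a : ℝ} (ha : 0 < a) (ξ : Euc d) : ww (a / 2) ξ ≤ 1 := by
  rw [ww]
  refine Real.rpow_le_one (by positivity) ?_ (by positivity)
  rw [div_le_one (by positivity)]
  nlinarith [sq_nonneg ‖ξ‖]

lemma ww_ge {d : ℕ} {a : ℝ} (ha : 0 < a) (ξ : Euc d) (hξ : 1 ≤ ‖ξ‖) :
    ‖ξ‖ ^ (-a) ≤ 2 ^ (a / 2) * ww (a / 2) ξ := by
  have h0 : 0 < ‖ξ‖ := by linarith
  have h1 : ‖ξ‖ ^ (-a) = (1 / ‖ξ‖ ^ 2) ^ (a / 2) := by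
    rw [one_div, Real.inv_rpow (by positivity), ← Real.rpow_natCast, ← Real.rpow_mul h0.le,
      ← Real.rpow_neg h0.le]
    congr 1; push_cast; ring
  rw [h1, ww, ← Real.mul_rpow (by norm_num) (by positivity)]
  refine Real.rpow_le_rpow (by positivity) ?_ (by positivity)
  rw [mul_one_div, div_le_div_iff₀ (by positivity) (by positivity)]
  nlinarith

lemma ww_ge_one {d : ℕ} {a : ℝ} (ha : 0 < a) (ξ : Euc d) (hξ : ‖ξ‖ ≤ 1) :
    1 ≤ 2 ^ (a / 2) * ww (a / 2) ξ := by
  rw [ww, ← Real.mul_rpow (by norm_num) (by positivity)]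
  refine Real.one_le_rpow ?_ (by positivity)
  rw [mul_one_div, one_le_div (by positivity)]
  nlinarith [norm_nonneg ξ]

lemma per_j {d : ℕ} {ν : Measure (Euc d)} [IsProbabilityMeasure ν] {u : ℝ → ℝ} {C b a : ℝ}
    (hν : ∀ᵐ ω ∂ν, ‖ω‖ = 1) (hu : ∀ ξ : Euc d, ∫ ω, Real.cos (inner ℝ ω ξ) ∂ν = u ‖ξ‖)
    (huc : Continuous u) (hC : 0 < C) (hb : 0 < b) (ha : 0 < a)
    (hdec : ∀ s, 0 < s → |u s| ≤ C * s ^ (-a)) (hlow : ∀ s, 0 ≤ s → -b ≤ u s)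
    (hsq : ∀ s, 1 - s ^ 2 / 2 ≤ u s) (hu1 : ∀ s, |u s| ≤ 1)
    (μ : Measure (Euc d)) [IsProbabilityMeasure μ] (E : Set (Euc d)) (hE : μ Eᶜ = 0)
    {c T₀ δ R : ℝ} (hca : c < a) (hT₀ : 1 ≤ T₀) (hδ : 0 < δ) (hδ1 : T₀ ≤ δ⁻¹ ^ 2) (hR : T₀ < R)
    (hg : ∀ T₁ T₂ : ℝ, T₀ ≤ T₁ → T₀ ≤ T₂ → FmuInt μ (T₁ * T₂) ≤ T₁ ^ c * FmuInt μ T₂)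
    (hrE : δ * R⁻¹ ∉ distSet E E) :
    (1 - δ ^ 2 / 2 + b) * FmuInt μ R ≤ b * FmuInt μ (δ⁻¹ ^ 2 * R) +
      C * (2 ^ c * (1 - 2 ^ (c - a))⁻¹) * δ ^ (a - 2 * c) * FmuInt μ R := by
  have hR0 : 0 < R := by linarith
  set r := δ * R⁻¹ with hr
  have hr0 : 0 < r := by positivity
  set A := δ⁻¹ ^ 2 with hA
  have hA1 : 1 ≤ A := by linarith
  set B := A * R with hB
  have hRB : R ≤ B := by rw [hB]; nlinarith
  have hB0 : 0 < B := by linarith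
  have hpc := ph_cont μ
  have hcompl : {ξ : Euc d | ‖ξ‖ ≤ B}ᶜ = {ξ : Euc d | B < ‖ξ‖} := by ext; simp
  have hms : MeasurableSet {ξ : Euc d | B < ‖ξ‖} := measurableSet_lt measurable_const measurable_norm
  have htail := tail_bound μ hca ha hT₀ hR.le hδ1 hg
  rw [← hB] at htail
  have hfin : ∫⁻ ξ : Euc d, ENNReal.ofReal (ph μ ξ * ww (a / 2) ξ) ≠ ∞ := by
    rw [← lintegral_add_compl _ (ms_ball (d := d) B), hcompl]
    refine ENNReal.add_ne_top.2 ⟨?_, ?_⟩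
    · refine ne_top_of_le_ne_top (ENNReal.ofReal_ne_top (r := FmuInt μ B)) ?_
      rw [FmuInt_lint]
      refine lintegral_mono fun ξ => ENNReal.ofReal_le_ofReal ?_
      exact mul_le_of_le_one_right (ph_nonneg _ _) (ww_le_one ha ξ)
    · refine ne_top_of_le_ne_top ENNReal.ofReal_ne_top (le_trans ?_ htail)
      refine setLIntegral_mono' hms fun ξ (hξ : B < ‖ξ‖) => ENNReal.ofReal_le_ofReal ?_
      exact mul_le_mul_of_nonneg_left (ww_le ha ξ (by linarith)) (ph_nonneg _ _)
  have hdec2 : ∀ ξ : Euc d, 0 < ‖ξ‖ → |u (r * ‖ξ‖)| ≤ C * r ^ (-a) * ‖ξ‖ ^ (-a) := by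
    intro ξ hξ
    refine (hdec _ (by positivity)).trans (le_of_eq ?_)
    rw [Real.mul_rpow hr0.le hξ.le]; ring
  have hCw : ∀ ξ : Euc d, |u (r * ‖ξ‖)| ≤ ((C * r ^ (-a) + 1) * 2 ^ (a / 2)) * ww (a / 2) ξ := by
    intro ξ
    have hq : 0 < C * r ^ (-a) := by positivity
    rcases le_total 1 ‖ξ‖ with h | h
    · have h1 := hdec2 ξ (by linarith)
      have h2 := ww_ge ha ξ h
      have h3 := mul_le_mul_of_nonneg_left h2 hq.le
      have h4 := (ww_pos (a / 2) ξ)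
      have h5 : 0 < (2:ℝ) ^ (a / 2) * ww (a / 2) ξ := by positivity
      nlinarith
    · have h1 := hu1 (r * ‖ξ‖)
      have h2 := ww_ge_one ha ξ h
      nlinarith
  obtain ⟨hgi, hgle⟩ := fatou_main hν hu huc μ E hE hr0 hrE (half_pos ha) (by positivity) hCw hfin
  rw [← integral_add_compl (ms_ball (d := d) B) hgi, hcompl] at hgle
  have hF : 0 ≤ FmuInt μ R := FmuInt_nonneg _ _
  have hq1 : (2:ℝ) ^ (c - a) < 1 :=
    Real.rpow_lt_one_of_one_lt_of_neg (by norm_num) (by linarith)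
  have hinv : 0 < (1 - (2:ℝ) ^ (c - a))⁻¹ := inv_pos.2 (by linarith)
  -- the tail
  have h1 : -(C * (2 ^ c * (1 - 2 ^ (c - a))⁻¹) * δ ^ (a - 2 * c) * FmuInt μ R) ≤
      ∫ ξ in {ξ : Euc d | B < ‖ξ‖}, ph μ ξ * u (r * ‖ξ‖) := by
    have hn := norm_integral_le_lintegral_norm (μ := volume.restrict {ξ : Euc d | B < ‖ξ‖})
      (fun ξ : Euc d => ph μ ξ * u (r * ‖ξ‖))
    have hl : ∫⁻ ξ in {ξ : Euc d | B < ‖ξ‖}, ENNReal.ofReal ‖ph μ ξ * u (r * ‖ξ‖)‖ ≤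
        ENNReal.ofReal (C * r ^ (-a)) * ENNReal.ofReal
          (R ^ (-a) * A ^ (c - a) * 2 ^ c * FmuInt μ R * (1 - 2 ^ (c - a))⁻¹) := by
      refine le_trans ?_ (mul_le_mul' le_rfl htail)
      rw [← lintegral_const_mul' _ _ ENNReal.ofReal_ne_top]
      refine setLIntegral_mono' hms fun ξ (hξ : B < ‖ξ‖) => ?_
      rw [← ENNReal.ofReal_mul (by positivity)]
      refine ENNReal.ofReal_le_ofReal ?_
      rw [Real.norm_eq_abs, abs_mul, abs_of_nonneg (ph_nonneg _ _)]
      calc _ ≤ ph μ ξ * (C * r ^ (-a) * ‖ξ‖ ^ (-a)) :=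
            mul_le_mul_of_nonneg_left (hdec2 ξ (by linarith)) (ph_nonneg _ _)
        _ = _ := by ring
    rw [← ENNReal.ofReal_mul (by positivity)] at hl
    have hl2 := hn.trans (ENNReal.toReal_le_of_le_ofReal (by positivity) hl)
    have he : r ^ (-a) * (R ^ (-a) * A ^ (c - a)) = δ ^ (a - 2 * c) := by
      have e1 : A ^ (c - a) = δ ^ (-2 * (c - a)) := by
        rw [hA, inv_pow, Real.inv_rpow (by positivity), ← Real.rpow_natCast,
          ← Real.rpow_mul hδ.le, ← Real.rpow_neg hδ.le]
        congr 1; push_cast; ring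
      rw [e1, ← mul_assoc, ← Real.mul_rpow hr0.le hR0.le, hr, inv_mul_cancel_right₀ hR0.ne',
        ← Real.rpow_add hδ]
      congr 1; ring
    rw [← he]
    rw [Real.norm_eq_abs] at hl2
    have := (abs_le.1 hl2).1
    refine le_trans (le_of_eq ?_) this
    ring
  -- the main part
  have hi1 : IntegrableOn (fun ξ : Euc d => ph μ ξ * u (r * ‖ξ‖)) {ξ : Euc d | ‖ξ‖ ≤ B} :=
    hgi.integrableOn
  have hi2 : IntegrableOn (fun ξ : Euc d => b * ph μ ξ) {ξ : Euc d | ‖ξ‖ ≤ B} :=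
    (ph_intOn μ B).const_mul b
  have hi12 : IntegrableOn (fun ξ : Euc d => ph μ ξ * u (r * ‖ξ‖) + b * ph μ ξ)
    {ξ : Euc d | ‖ξ‖ ≤ B} := hi1.add hi2
  have hsub : {ξ : Euc d | ‖ξ‖ ≤ R} ⊆ {ξ : Euc d | ‖ξ‖ ≤ B} :=
    fun ξ (hξ : ‖ξ‖ ≤ R) => hξ.trans hRB
  have h2 : ∫ ξ in {ξ : Euc d | ‖ξ‖ ≤ R}, (ph μ ξ * u (r * ‖ξ‖) + b * ph μ ξ) ≤
      ∫ ξ in {ξ : Euc d | ‖ξ‖ ≤ B}, (ph μ ξ * u (r * ‖ξ‖) + b * ph μ ξ) := by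
    refine setIntegral_mono_set hi12 (Eventually.of_forall fun ξ => ?_)
      (Eventually.of_forall hsub)
    have h3 := hlow (r * ‖ξ‖) (by positivity)
    have h4 := mul_nonneg (ph_nonneg μ ξ) (by linarith : 0 ≤ u (r * ‖ξ‖) + b)
    simp only [Pi.zero_apply]
    linarith
  have h3 : (1 - δ ^ 2 / 2 + b) * FmuInt μ R ≤
      ∫ ξ in {ξ : Euc d | ‖ξ‖ ≤ R}, (ph μ ξ * u (r * ‖ξ‖) + b * ph μ ξ) := by
    rw [FmuInt_eq, ← integral_const_mul]
    refine setIntegral_mono_on ((ph_intOn μ R).const_mul _) (hi12.mono_set hsub) (ms_ball R) ?_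
    intro ξ (hξ : ‖ξ‖ ≤ R)
    have h4 := hsq (r * ‖ξ‖)
    have h5 : r * ‖ξ‖ ≤ δ := by
      calc r * ‖ξ‖ ≤ r * R := mul_le_mul_of_nonneg_left hξ hr0.le
        _ = δ := by rw [hr, inv_mul_cancel_right₀ hR0.ne']
    have h6 : (r * ‖ξ‖) ^ 2 ≤ δ ^ 2 := pow_le_pow_left₀ (by positivity) h5 2
    have h7 := mul_le_mul_of_nonneg_left (by linarith : 1 - δ ^ 2 / 2 + b ≤ u (r * ‖ξ‖) + b)
      (ph_nonneg μ ξ)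
    linarith
  rw [integral_add hi1 hi2, integral_const_mul, ← FmuInt_eq] at h2
  linarith

lemma telescope (F G : ℕ → ℝ) (n : ℕ) (hF : ∀ j, 0 ≤ F j)
    (h : ∀ j, j + 1 < n + 1 → G j ≤ F (j + 1)) :
    ∑ j ∈ Finset.range (n + 1), (G j - F j) ≤ G n := by
  induction n with
  | zero => simp [hF 0]
  | succ k ih =>
    rw [Finset.sum_range_succ]
    have h1 := ih fun j hj => h j (by omega)
    have h2 := h k (by omega)
    linarith


/-- Theorem 1.11: given `c ∈ (0,(d-1)/4)`, `T₀ ≥ 1`, `M ≥ 4`, there is `δ_M > 0` such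
that for any probability measure `μ` supported on `E ⊆ [0,1]^d` with
`F_μ(T₁T₂) ≤ T₁^c F_μ(T₂)` for `T₁,T₂ ≥ T₀`: if `δ ∈ (0,δ_M)` and
`R_1,…,R_J ∈ (T₀,∞)` satisfy `R_{j+1} ≥ δ^{-2} R_j` and
`∑_j F_μ(R_j) > (1 - 2/M) F_μ(δ^{-2} R_J)`, then some `δ R_j⁻¹` lies in `Δ(E)`. -/
theorem statement9 (d : ℕ) (hd : 2 ≤ d) (c T₀ M : ℝ)
    (hc0 : 0 < c) (hc : c < ((d : ℝ) - 1) / 4) (hT₀ : 1 ≤ T₀) (hM : 4 ≤ M) :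
    ∃ δM : ℝ, 0 < δM ∧
      ∀ μ : Measure (Euc d), IsProbabilityMeasure μ →
      ∀ E : Set (Euc d), E ⊆ unitCube d → μ Eᶜ = 0 →
      (∀ T₁ T₂ : ℝ, T₀ ≤ T₁ → T₀ ≤ T₂ → FmuInt μ (T₁ * T₂) ≤ T₁ ^ c * FmuInt μ T₂) →
      ∀ δ : ℝ, 0 < δ → δ < δM →
      ∀ J : ℕ, 1 ≤ J → ∀ R : ℕ → ℝ,
        (∀ j < J, T₀ < R j) →
        (∀ j : ℕ, j + 1 < J → δ⁻¹ ^ 2 * R j ≤ R (j+1)) →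
        (1 - 2/M) * FmuInt μ (δ⁻¹ ^ 2 * R (J-1)) < ∑ j ∈ Finset.range J, FmuInt μ (R j) →
        ∃ j < J, δ * (R j)⁻¹ ∈ distSet E E := by
  obtain ⟨ν, u, C, b, hνp, hν, hu, huc, hC, hb, hb2, hdec, hlow, hsq, hu1⟩ := sphere_pkg d hd
  set a : ℝ := ((d : ℝ) - 1) / 2 with ha
  have ha2 : 2 * c < a := by rw [ha]; linarith
  have ha0 : 0 < a := by linarith
  set Q : ℝ := C * (2 ^ c * (1 - 2 ^ (c - a))⁻¹) with hQ
  have hlim : Tendsto (fun δ : ℝ => δ ^ 2 / 2 + Q * δ ^ (a - 2 * c)) (𝓝[>] 0) (𝓝 0) := by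
    have h1 : ContinuousAt (fun δ : ℝ => δ ^ 2 / 2 + Q * δ ^ (a - 2 * c)) 0 := by
      have := Real.continuousAt_rpow_const 0 (a - 2 * c) (Or.inr (by linarith))
      fun_prop
    have h2 := h1.tendsto
    simp only [Real.zero_rpow (by linarith : a - 2 * c ≠ 0)] at h2
    norm_num at h2
    exact h2.mono_left nhdsWithin_le_nhds
  have hev1 := hlim.eventually (eventually_lt_nhds (by linarith : (0:ℝ) < 1 - 2 * b))
  have hev2 : ∀ᶠ δ : ℝ in 𝓝[>] 0, T₀ ≤ δ⁻¹ ^ 2 :=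
    ((tendsto_pow_atTop two_ne_zero).comp tendsto_inv_nhdsGT_zero).eventually_ge_atTop T₀
  obtain ⟨δM, hδM, hsub⟩ := mem_nhdsGT_iff_exists_Ioo_subset.1 (hev1.and hev2)
  refine ⟨δM, hδM, ?_⟩
  intro μ hμ E _ hE hg δ hδ0 hδM J hJ R hRT hRR hsum
  obtain ⟨hη, hδT⟩ := hsub ⟨hδ0, hδM⟩
  by_contra! hcon
  obtain ⟨n, rfl⟩ : ∃ n, J = n + 1 := ⟨J - 1, by omega⟩
  rw [Nat.add_sub_cancel] at hsum
  have hj : ∀ j ∈ Finset.range (n + 1), (1 - δ ^ 2 / 2 - Q * δ ^ (a - 2 * c)) * FmuInt μ (R j) ≤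
      b * (FmuInt μ (δ⁻¹ ^ 2 * R j) - FmuInt μ (R j)) := by
    intro j hj
    have hj := Finset.mem_range.1 hj
    have := per_j hν hu huc hC hb ha0 hdec hlow hsq hu1 μ E hE (by linarith : c < a) hT₀ hδ0 hδT
      (hRT j hj) hg (hcon j hj)
    rw [← hQ] at this
    linarith
  have hS := Finset.sum_le_sum hj
  rw [← Finset.mul_sum, ← Finset.mul_sum] at hS
  have htel := telescope (fun j => FmuInt μ (R j)) (fun j => FmuInt μ (δ⁻¹ ^ 2 * R j)) n
    (fun j => FmuInt_nonneg _ _) (fun j hj => FmuInt_mono μ (hRR j hj))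
  have hS2 := hS.trans (mul_le_mul_of_nonneg_left htel hb.le)
  set S := ∑ j ∈ Finset.range (n + 1), FmuInt μ (R j) with hSdef
  set G := FmuInt μ (δ⁻¹ ^ 2 * R n) with hG
  have hS0 : 0 ≤ S := Finset.sum_nonneg fun j _ => FmuInt_nonneg _ _
  have hG0 : 0 ≤ G := FmuInt_nonneg _ _
  have hη' : 2 * b ≤ 1 - δ ^ 2 / 2 - Q * δ ^ (a - 2 * c) := by
    have : δ ^ 2 / 2 + Q * δ ^ (a - 2 * c) < 1 - 2 * b := hη
    linarith
  have h1 : 2 * b * S ≤ b * G := (mul_le_mul_of_nonneg_right hη' hS0).trans hS2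
  have h2 : 2 * S ≤ G := by
    by_contra! h
    nlinarith
  have hM2 : 2 / M ≤ 1 / 2 := by
    rw [div_le_div_iff₀ (by linarith) (by norm_num)]; linarith
  nlinarith
end
end

section
/- There exists a constant c_0 > 0, depending only on the dimension d ≥ 2, with the following property. Let σ ∈ (1, 3/2) and let q be an integer such that c_0 q^{σ−1} exceeds a fixed dimensional constant. Then the distance set of F[q;σ] contains the interval [c_0^{−2} q^{2σ−3}, 1], i.e. Δ(F[q;σ]) ⊇ [c_0^{−2} q^{2σ−3}, 1]. -/
open MeasureTheory Set Metric Filter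
open scoped ENNReal NNReal Topology

noncomputable section

/-- The building block set `F[q;σ] = ⋃_{p ∈ ℤ_q^d} (p/q + q^{-σ}[0,1]^d)`. -/
def Fqs (d q : ℕ) (σ : ℝ) : Set (Euc d) :=
  {x | ∃ p : Fin d → ℕ, (∀ i, p i < q) ∧
    ∀ i, (p i : ℝ) / q ≤ x i ∧ x i ≤ (p i : ℝ) / q + (q : ℝ) ^ (-σ)}

lemma aux_arith (T R : ℝ) (q : ℕ) (hR : 1 ≤ R) (hT : 16 * R ^ 2 ≤ T) (hTq : T ≤ q) :
    ∃ a b : ℕ, a < q ∧ b < q ∧ (a : ℝ) ^ 2 + (b : ℝ) ^ 2 ≤ T ^ 2 ∧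
      T ^ 2 ≤ ((a : ℝ) + 1 / R) ^ 2 + (b : ℝ) ^ 2 := by
  have hT16 : 16 ≤ T := by nlinarith
  have hc : ⌈T⌉₊ ≤ q := Nat.ceil_le.2 hTq
  have hc1 : T ≤ (⌈T⌉₊ : ℝ) := Nat.le_ceil T
  have hc2 : (⌈T⌉₊ : ℝ) < T + 1 := Nat.ceil_lt_add_one (by linarith)
  obtain ⟨a, ha⟩ : ∃ a, ⌈T⌉₊ = a + 1 := Nat.exists_eq_succ_of_ne_zero (by
    intro h; rw [h] at hc1; norm_num at hc1; linarith)
  rw [ha] at hc hc1 hc2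
  push_cast at hc1 hc2
  have hnn : 0 ≤ T ^ 2 - (a : ℝ) ^ 2 := by nlinarith
  set s := Real.sqrt (T ^ 2 - (a : ℝ) ^ 2) with hs
  have hs2 : s ^ 2 = T ^ 2 - (a : ℝ) ^ 2 := Real.sq_sqrt hnn
  have hs0 : 0 ≤ s := Real.sqrt_nonneg _
  have hb1 : (⌊s⌋₊ : ℝ) ≤ s := Nat.floor_le hs0
  have hb2 : s < (⌊s⌋₊ : ℝ) + 1 := Nat.lt_floor_add_one s
  have hb0 : (0:ℝ) ≤ (⌊s⌋₊ : ℝ) := Nat.cast_nonneg _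
  refine ⟨a, ⌊s⌋₊, by omega, ?_, ?_, ?_⟩
  · have : (⌊s⌋₊ : ℝ) < q := by
      by_contra h
      push Not at h
      nlinarith
    exact_mod_cast this
  · nlinarith
  · generalize (⌊s⌋₊ : ℝ) = b at *
    have hbT : b ^ 2 ≤ 2 * T := by nlinarith
    have key : R * (2 * b + 1) ≤ 2 * a := by
      have h1 : (2 * b + 1) ^ 2 ≤ 16 * T + 2 := by nlinarith [sq_nonneg (2 * b - 1)]
      have h2 : (R * (2 * b + 1)) ^ 2 ≤ (2 * T - 2) ^ 2 := by
        calc (R * (2 * b + 1)) ^ 2 = R ^ 2 * (2 * b + 1) ^ 2 := by ring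
          _ ≤ (T / 16) * (16 * T + 2) := by
            apply mul_le_mul (by linarith) h1 (by positivity) (by linarith)
          _ ≤ _ := by nlinarith
      have := abs_le_of_sq_le_sq h2 (by linarith)
      linarith [le_of_abs_le this]
    have hR0 : 0 < R := by linarith
    have h3 : 2 * b + 1 ≤ 2 * a * (1 / R) := by
      rw [mul_one_div, le_div_iff₀ hR0]; linarith
    nlinarith [sq_nonneg (1 / R)]

/-- Lemma 2.1 (c): there is a constant `c₀ > 0` depending only on `d ≥ 2` (and a fixed
dimensional constant `C`) such that for `σ ∈ (1,3/2)` and integers `q` with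
`c₀ q^{σ-1} ≥ C`, the distance set of `F[q;σ]` contains `[c₀^{-2} q^{2σ-3}, 1]`. -/
theorem statement12 (d : ℕ) (hd : 2 ≤ d) :
    ∃ c₀ C : ℝ, 0 < c₀ ∧ 0 < C ∧
      ∀ σ : ℝ, 1 < σ → σ < 3/2 → ∀ q : ℕ, C ≤ c₀ * (q : ℝ) ^ (σ - 1) →
        Icc ((1 / c₀ ^ 2) * (q : ℝ) ^ (2 * σ - 3)) 1 ⊆ distSet (Fqs d q σ) (Fqs d q σ) := by
  obtain ⟨n, rfl⟩ : ∃ n, d = n + 2 := ⟨d - 2, by omega⟩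
  refine ⟨1 / 4, 1, by norm_num, by norm_num, ?_⟩
  intro σ h1 h2 q hq t ht
  have hq0 : q ≠ 0 := by
    rintro rfl
    rw [Nat.cast_zero, Real.zero_rpow (by linarith)] at hq
    norm_num at hq
  have hqp : (0:ℝ) < q := by positivity
  have hR : 1 ≤ (q:ℝ) ^ (σ - 1) := by linarith
  obtain ⟨ht1, ht2⟩ := ht
  have e1 : (q:ℝ) ^ (2 * σ - 3) * q = ((q:ℝ) ^ (σ - 1)) ^ 2 := by
    rw [← Real.rpow_add_one hqp.ne', ← Real.rpow_mul_natCast hqp.le]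
    congr 1; push_cast; ring
  have e2 : (q:ℝ) ^ (-σ) = 1 / (q:ℝ) ^ (σ - 1) / q := by
    rw [one_div, ← Real.rpow_neg hqp.le, ← Real.rpow_sub_one hqp.ne']
    congr 1; ring
  generalize (q:ℝ) ^ (σ - 1) = R at *
  have hT : 16 * R ^ 2 ≤ t * q := by
    rw [← e1]
    have := mul_le_mul_of_nonneg_right ht1 hqp.le
    norm_num at this
    linarith
  have ht0 : 0 ≤ t := by
    by_contra h
    push Not at h
    nlinarith
  obtain ⟨a, b, haq, hbq, hab1, hab2⟩ := aux_arith (t * q) R q hR hT (by nlinarith)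
  set A := Real.sqrt ((t * q) ^ 2 - (b:ℝ) ^ 2) with hA
  have hA2 : A ^ 2 = (t * q) ^ 2 - (b:ℝ) ^ 2 := Real.sq_sqrt (by nlinarith [sq_nonneg (a:ℝ)])
  have hA0 : 0 ≤ A := Real.sqrt_nonneg _
  have hδ : 0 ≤ 1 / R := by positivity
  have hA3 : (a:ℝ) ≤ A := by
    apply Real.le_sqrt_of_sq_le; linarith
  have hA4 : A ≤ a + 1 / R := by
    apply Real.sqrt_le_iff.2 ⟨by positivity, by linarith⟩
  have hη : 0 ≤ 1 / R / q := by positivity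
  refine ⟨WithLp.toLp 2 (Fin.cons (A / q) (Fin.cons ((b:ℝ) / q) (fun _ => 0))), ?_, 0, ?_, ?_⟩
  · refine ⟨Fin.cons a (Fin.cons b (fun _ => 0)), ?_, ?_⟩
    · intro i
      refine Fin.cases ?_ (fun i => Fin.cases ?_ (fun i => ?_) i) i
      · simpa using haq
      · simpa using hbq
      · simpa using Nat.pos_of_ne_zero hq0
    · rw [e2]
      intro i
      refine Fin.cases ?_ (fun i => Fin.cases ?_ (fun i => ?_) i) i
      · simp only [Fin.cons_zero]
        rw [← add_div]
        exact ⟨by gcongr, by gcongr⟩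
      · simp only [Fin.cons_zero, Fin.cons_succ]
        exact ⟨le_rfl, by linarith⟩
      · simp only [Fin.cons_succ, Nat.cast_zero, zero_div, zero_add]
        exact ⟨le_rfl, hη⟩
  · refine ⟨fun _ => 0, fun _ => Nat.pos_of_ne_zero hq0, fun i => ?_⟩
    rw [e2]
    simp only [Nat.cast_zero, zero_div, zero_add, PiLp.zero_apply]
    exact ⟨le_rfl, hη⟩
  · rw [dist_zero_right, EuclideanSpace.norm_eq, Fin.sum_univ_succ, Fin.sum_univ_succ]
    simp only [Fin.cons_zero, Fin.cons_succ, Real.norm_eq_abs, sq_abs]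
    rw [div_pow, hA2]
    have : ((t * q) ^ 2 - (b:ℝ) ^ 2) / (q:ℝ) ^ 2 + (((b:ℝ) / q) ^ 2 + ∑ i : Fin n, (0:ℝ) ^ 2) = t ^ 2 := by
      simp
      field_simp
      ring
    rw [this, Real.sqrt_sq ht0]
end
end
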